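/- arXiv:1512.05992 — 2 statements merged into one kernel-verified Lean document; each statement's English description precedes it below -/
import Mathlib

section
/- Let n ≥ 1 and let g_1, …, g_{n+1} : [-1,1] → [0,∞) be measurable functions. Then ∫_{S^n} ∏_{i=1}^{n+1} g_i(x_i) dσ_n(x) ≤ ∏_{i=1}^{n+1} ( ∫_{S^n} g_i(x_i)^2 dσ_n(x) )^{1/2}, where x_i denotes the i-th coordinate of the point x ∈ S^n ⊂ ℝ^{n+1}. -/
open MeasureTheory Metric
open scoped ENNReal BigOperators

/-- The rotation-invariant (Haar) probability measure on the unit sphere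
`S^n ⊂ ℝ^{n+1}`: the surface measure `volume.toSphere`, normalized to total mass `1`. -/
noncomputable def sphereHaar (n : ℕ) :
    Measure (sphere (0 : EuclideanSpace ℝ (Fin (n + 1))) 1) :=
  ((volume : Measure (EuclideanSpace ℝ (Fin (n + 1)))).toSphere Set.univ)⁻¹ •
    (volume : Measure (EuclideanSpace ℝ (Fin (n + 1)))).toSphere


section BLHelpers
open Polynomial


theorem poly_taylor (f : ℝ[X]) : ∃ C : ℝ, 0 ≤ C ∧ ∀ x h : ℝ, |x| ≤ 1 → |h| ≤ 2 →
    |f.eval (x+h) - f.eval x - (derivative f).eval x * h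
      - (derivative (derivative f)).eval x * h^2 / 2| ≤ C * |h|^3 := by
  have key : ∀ (f : ℝ[X]), (∃ C : ℝ, 0 ≤ C ∧ ∀ x h : ℝ, |x| ≤ 1 → |h| ≤ 2 →
    |f.eval (x+h) - f.eval x - (derivative f).eval x * h
      - (derivative (derivative f)).eval x * h^2 / 2| ≤ C * |h|^3) →
    (∃ C : ℝ, 0 ≤ C ∧ ∀ x h : ℝ, |x| ≤ 1 → |h| ≤ 2 →
    |(f*X).eval (x+h) - (f*X).eval x - (derivative (f*X)).eval x * h
      - (derivative (derivative (f*X))).eval x * h^2 / 2| ≤ C * |h|^3) := by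
    rintro f ⟨C, hC, H⟩
    obtain ⟨M, hM⟩ := (isCompact_Icc (a := (-1:ℝ)) (b := 1)).exists_bound_of_continuousOn
      (f := fun x => (derivative (derivative f)).eval x) (Polynomial.continuous _).continuousOn
    refine ⟨3 * C + M / 2, ?_, ?_⟩
    · have := (norm_nonneg _).trans (hM 0 (by simp))
      positivity
    · intro x h hx hh
      have h1 := H x h hx hh
      have h2 := hM x (by simpa [abs_le] using hx)
      rw [Real.norm_eq_abs] at h2
      have e : (f*X).eval (x+h) - (f*X).eval x - (derivative (f*X)).eval x * h
          - (derivative (derivative (f*X))).eval x * h^2 / 2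
          = (x+h) * (f.eval (x+h) - f.eval x - (derivative f).eval x * h
      - (derivative (derivative f)).eval x * h^2 / 2) + (derivative (derivative f)).eval x / 2 * h^3 := by
        simp; ring
      rw [e]
      refine (abs_add_le _ _).trans ?_
      rw [abs_mul, abs_mul, abs_pow, abs_div, abs_two]
      have h3 : |x + h| ≤ 3 := (abs_add_le _ _).trans (by linarith)
      have h4 : 0 ≤ |h|^3 := by positivity
      have := mul_le_mul h3 h1 (abs_nonneg _) (by norm_num)
      nlinarith
  induction f using Polynomial.induction_on with
  | C a => exact ⟨0, le_rfl, by simp⟩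
  | add p q hp hq =>
    obtain ⟨C, hC, H⟩ := hp
    obtain ⟨D, hD, K⟩ := hq
    refine ⟨C + D, by positivity, fun x h hx hh => ?_⟩
    have := H x h hx hh
    have := K x h hx hh
    rw [add_mul]
    refine le_trans (le_of_eq ?_) ((abs_add_le _ _).trans (add_le_add (H x h hx hh) (K x h hx hh)))
    congr 1
    simp; ring
  | monomial m a ih =>
    have := key _ ih
    rwa [mul_assoc, ← pow_succ] at this

set_option maxHeartbeats 2000000 in
/-- symmetric second difference -/
theorem poly_symm (f : ℝ[X]) : ∃ C : ℝ, 0 ≤ C ∧ ∀ x y s c : ℝ, |x| ≤ 1 → |y| ≤ 1 → 0 ≤ s → 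
    0 ≤ c → c^2+s^2 = 1 →
    |f.eval (c*x+s*y) + f.eval (c*x-s*y) - 2 * f.eval x - 
      s^2 * ((derivative (derivative f)).eval x * y^2 - (derivative f).eval x * x)| ≤ C * s^3 := by
  obtain ⟨C, hC, H⟩ := poly_taylor f
  obtain ⟨M, hM⟩ := (isCompact_Icc (a := (-1:ℝ)) (b := 1)).exists_bound_of_continuousOn
      (f := fun x => (derivative (derivative f)).eval x) (Polynomial.continuous _).continuousOn
  obtain ⟨M', hM'⟩ := (isCompact_Icc (a := (-1:ℝ)) (b := 1)).exists_bound_of_continuousOn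
      (f := fun x => (derivative f).eval x) (Polynomial.continuous _).continuousOn
  have hM0 := (norm_nonneg _).trans (hM 0 (by simp))
  have hM0' := (norm_nonneg _).trans (hM' 0 (by simp))
  refine ⟨16 * C + M + M', by positivity, ?_⟩
  intro x y s c hx hy hs hc hcs
  have hs1 : s ≤ 1 := by nlinarith
  have hc1 : c ≤ 1 := by nlinarith
  have h1c : 1 - c ≤ s^2 := by nlinarith
  have h1s : s^2 ≤ s := by nlinarith
  have hb : |(c-1)*x| ≤ s^2 := by
    rw [abs_mul, abs_sub_comm, abs_of_nonneg (by linarith : 0 ≤ 1 - c)]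
    nlinarith [abs_nonneg x]
  have hb2 : |s*y| ≤ s := by
    rw [abs_mul, abs_of_nonneg hs]
    nlinarith [abs_nonneg y]
  have hp : |(c-1)*x + s*y| ≤ 2 * s := (abs_add_le _ _).trans (by linarith)
  have hm : |(c-1)*x - s*y| ≤ 2 * s := (abs_sub _ _).trans (by linarith)
  have Tp := H x ((c-1)*x + s*y) hx (by linarith)
  have Tm := H x ((c-1)*x - s*y) hx (by linarith)
  have cp : |(c-1)*x + s*y|^3 ≤ 8 * s^3 := by
    calc _ ≤ (2*s)^3 := by gcongr
      _ = _ := by ring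
  have cm : |(c-1)*x - s*y|^3 ≤ 8 * s^3 := by
    calc _ ≤ (2*s)^3 := by gcongr
      _ = _ := by ring
  have d2 := hM x (by simpa [abs_le] using hx)
  have d1 := hM' x (by simpa [abs_le] using hx)
  rw [Real.norm_eq_abs] at d1 d2
  have e1 : x + ((c-1)*x + s*y) = c*x+s*y := by ring
  have e2 : x + ((c-1)*x - s*y) = c*x-s*y := by ring
  rw [e1] at Tp
  rw [e2] at Tm
  set A := f.eval (c*x+s*y)
  set B := f.eval (c*x-s*y)
  set f0 := f.eval x
  set f1 := (derivative f).eval x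
  set f2 := (derivative (derivative f)).eval x
  have q1 : (1-c)^2 ≤ s^3 := by nlinarith [pow_nonneg hs 3]
  have q2 : 0 ≤ s^2 - 2*(1-c) + s^3 ∧ s^2 - 2*(1-c) ≤ s^3 := by
    have : s^2 - 2*(1-c) = -(1-c)^2 := by linear_combination hcs
    rw [this]; constructor <;> nlinarith [pow_nonneg hs 3]
  have r : A + B - 2 * f0 - s^2 * (f2 * y^2 - f1 * x) = 
     (A - f0 - f1 * ((c-1)*x + s*y) - f2 * ((c-1)*x + s*y)^2/2) + 
     (B - f0 - f1 * ((c-1)*x - s*y) - f2 * ((c-1)*x - s*y)^2/2) + 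
      (f2 * ((1-c)^2*x^2) + f1 * ((s^2 - 2*(1-c)) * x)) := by ring
  rw [r]
  have x2 : x^2 ≤ 1 := by rw [← sq_abs]; nlinarith [abs_nonneg x]
  have r1 : |f2 * ((1-c)^2*x^2)| ≤ M * s^3 := by
    rw [abs_mul]
    gcongr
    rw [abs_of_nonneg (by positivity)]
    nlinarith [sq_nonneg (1-c)]
  have r2 : |f1 * ((s^2 - 2*(1-c)) * x)| ≤ M' * s^3 := by
    rw [abs_mul]
    gcongr
    rw [abs_mul]
    have : |s^2 - 2*(1-c)| ≤ s^3 := by rw [abs_le]; constructor <;> linarith [q2.1,q2.2]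
    calc _ ≤ s^3 * 1 := by gcongr
      _ = _ := by ring
  have t1 := mul_le_mul_of_nonneg_left cp hC
  have t2 := mul_le_mul_of_nonneg_left cm hC
  refine (abs_add_le _ _).trans ?_
  refine (add_le_add (abs_add_le _ _) (abs_add_le _ _)).trans ?_
  linarith

theorem limit_nonneg {a C : ℝ} (h : ∀ s : ℝ, 0 < s → s ≤ 1 → 0 ≤ s^2 * a + C * s^3) : 0 ≤ a := by
  by_contra ha
  push Not at ha
  have h1 : ∀ s : ℝ, 0 < s → s ≤ 1 → 0 ≤ a + C * s := by
    intro s hs hs1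
    have := h s hs hs1
    have e : s^2*a+C*s^3 = s^2 * (a + C*s) := by ring
    rw [e] at this
    exact nonneg_of_mul_nonneg_right this (by positivity)
  by_cases hC : C ≤ 0
  · have := h1 1 one_pos le_rfl
    linarith
  · push Not at hC
    have := h1 (min 1 (-a/(2*C))) (lt_min one_pos (by apply div_pos <;> linarith)) (min_le_left _ _)
    have h3 : C * min 1 (-a/(2*C)) ≤ C * (-a/(2*C)) := by gcongr; exact min_le_right _ _
    have : C * (-a/(2*C)) = -a/2 := by field_simp
    linarith

noncomputable def Lop (n : ℕ) (p : ℝ[X]) : ℝ[X] :=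
  (1 - X^2) * derivative (derivative p) - C (n:ℝ) * X * derivative p

/-- maximum principle -/
theorem Lop_min (n : ℕ) (hn : 1 ≤ n) (p : ℝ[X]) (x : ℝ) (hx : |x| ≤ 1)
    (hmin : ∀ y : ℝ, |y| ≤ 1 → p.eval x ≤ p.eval y) : 0 ≤ (Lop n p).eval x := by
  obtain ⟨C, hC, H⟩ := poly_symm p
  have key : ∀ y : ℝ, x^2+y^2 ≤ 1 →
      0 ≤ (derivative (derivative p)).eval x * y^2 - (derivative p).eval x * x := by
    intro y hy
    apply limit_nonneg (C := C)
    intro s hs hs1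
    have hs2 : 0 ≤ 1 - s^2 := by nlinarith
    have hc2 := Real.sq_sqrt hs2
    have hc0 := Real.sqrt_nonneg (1-s^2)
    set c := √(1-s^2)
    have hcs : c^2+s^2 = 1 := by linarith
    have hy1 : |y| ≤ 1 := by rw [← sq_le_one_iff_abs_le_one]; nlinarith
    have := H x y s c hx hy1 hs.le hc0 hcs
    have h1 := hmin (c*x+s*y) (by
      rw [← sq_le_one_iff_abs_le_one]; nlinarith [sq_nonneg (c*y-s*x)])
    have h2 := hmin (c*x-s*y) (by
      rw [← sq_le_one_iff_abs_le_one]; nlinarith [sq_nonneg (c*y+s*x)])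
    have := (abs_le.1 this).2
    linarith
  have x2 : x^2 ≤ 1 := by rwa [sq_le_one_iff_abs_le_one]
  have k1 := key 0 (by simpa using x2)
  have k2 := key (√(1-x^2)) (by rw [Real.sq_sqrt] <;> linarith)
  rw [Real.sq_sqrt (by linarith)] at k2
  have hn' : (1:ℝ) ≤ n := by exact_mod_cast hn
  simp only [Lop, eval_sub, eval_mul, eval_one, eval_pow, eval_X, eval_C]
  nlinarith

theorem Lop_add (n) (p q : ℝ[X]) : Lop n (p+q) = Lop n p + Lop n q := by
  simp [Lop]; ring
theorem Lop_smul (n) (a : ℝ) (q : ℝ[X]) : Lop n (C a * q) = C a * Lop n q := by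
  simp [Lop]; ring
theorem Lop_sum (n) {ι : Type*} (s : Finset ι) (q : ι → ℝ[X]) :
    Lop n (∑ i ∈ s, q i) = ∑ i ∈ s, Lop n (q i) := by
  classical
  induction s using Finset.induction_on with
  | empty => simp [Lop]
  | insert a s ha ih => rw [Finset.sum_insert ha, Finset.sum_insert ha, Lop_add, ih]

noncomputable def lam (n m : ℕ) : ℝ := m * (m + n - 1)

theorem Lop_X_pow (n m : ℕ) : Lop n (X^m) = C (-lam n m) * X^m + C ((m:ℝ)*(m-1)) * X^(m-2) := by
  rcases m with _ | _ | m
  · simp [Lop, lam]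
  · simp [Lop, lam]
  · simp [Lop, lam]; ring

theorem lam_lt (n : ℕ) (hn : 1 ≤ n) {j m : ℕ} (h : j < m) : lam n j < lam n m := by
  unfold lam
  have h1 : (j:ℝ) + 1 ≤ m := by exact_mod_cast h
  have h2 : (1:ℝ) ≤ n := by exact_mod_cast hn
  have h3 : (0:ℝ) ≤ j := by positivity
  nlinarith

def IsDecomp (n d : ℕ) (p : ℝ[X]) (q : ℕ → ℝ[X]) : Prop :=
  (∃ a, q 0 = C a) ∧ (∀ m, Lop n (q m) = C (-lam n m) * q m) ∧ (∀ m, d < m → q m = 0) ∧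
    ∑ m ∈ Finset.range (d+1), q m = p

theorem decomp_mono {n d e : ℕ} {p q} (h : IsDecomp n d p q) (hde : d ≤ e) : IsDecomp n e p q := by
  obtain ⟨h1, h2, h3, h4⟩ := h
  refine ⟨h1, h2, fun m hm => h3 m (by omega), ?_⟩
  rw [← h4]
  symm
  apply Finset.sum_subset
  · intro x; simp; omega
  · intro x _ hx; apply h3; simp at hx; omega

theorem decomp_X (n : ℕ) (hn : 1 ≤ n) (m : ℕ) : ∃ q, IsDecomp n m (X^m) q := by
  induction m using Nat.strong_induction_on with
  | _ m ih =>
  by_cases hm : m = 0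
  · subst hm
    refine ⟨fun k => if k = 0 then 1 else 0, ⟨1, by simp⟩, ?_, ?_, by simp⟩
    · intro k; by_cases hk : k = 0 <;> simp [hk, Lop, lam]
    · intro k hk; simp; omega
  obtain ⟨r, hr⟩ : ∃ r : ℕ → ℝ[X], (∃ a, r 0 = C a) ∧ (∀ k, Lop n (r k) = C (-lam n k) * r k) ∧
      (∀ k, m ≤ k → r k = 0) ∧ 
      C ((m:ℝ)*(m-1)) * X^(m-2) = C ((m:ℝ)*(m-1)) * ∑ k ∈ Finset.range m, r k := by
    by_cases hm1 : m = 1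
    · refine ⟨0, ⟨0, by simp⟩, by simp [Lop], by simp, ?_⟩
      simp [hm1]
    · obtain ⟨r, h⟩ := ih (m-2) (by omega)
      obtain ⟨h1, h2, h3, h4⟩ := decomp_mono h (show m - 2 ≤ m - 1 by omega)
      refine ⟨r, h1, h2, fun k hk => h3 k (by omega), ?_⟩
      rw [show m - 1 + 1 = m by omega] at h4
      rw [h4]
  obtain ⟨⟨a, ha⟩, h2, h3, h4⟩ := hr
  let β : ℕ → ℝ := fun j => m*(m-1)/(lam n m - lam n j)
  let p : ℝ[X] := X^m - ∑ k ∈ Finset.range m, C (β k) * r k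
  have hp : Lop n p = C (-lam n m) * p := by
    have e : p = X^m + ∑ k ∈ Finset.range m, C (-β k) * r k := by
      simp [p, sub_eq_add_neg]
    rw [e, Lop_add, Lop_sum, Lop_X_pow, h4, mul_add, add_assoc, Finset.mul_sum, Finset.mul_sum,
      ← Finset.sum_add_distrib]
    congr 1
    apply Finset.sum_congr rfl
    intro k hk
    rw [Lop_smul, h2, ← mul_assoc, ← mul_assoc, ← C_mul, ← C_mul, ← add_mul, ← C_add]
    congr 2
    have := lam_lt n hn (Finset.mem_range.1 hk)
    have : lam n m - lam n k ≠ 0 := by linarith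
    simp only [β]
    field_simp
    ring
  refine ⟨fun k => if k < m then C (β k) * r k else if k = m then p else 0, ?_, ?_, ?_, ?_⟩
  · refine ⟨β 0 * a, ?_⟩
    simp [Nat.pos_of_ne_zero hm, ha]
  · intro k
    rcases lt_trichotomy k m with h | h | h
    · simp only [h, if_true, Lop_smul, h2]; ring
    · subst h; simpa using hp
    · have h1 : ¬ k < m := by omega
      have h2 : ¬ k = m := by omega
      simp [h1, h2, Lop]
  · intro k hk
    have h1 : ¬ k < m := by omega
    have h2 : ¬ k = m := by omega
    simp [h1, h2]
  · rw [Finset.sum_range_succ]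
    simp only [lt_irrefl, if_false, if_true]
    rw [Finset.sum_congr rfl (g := fun k => C (β k) * r k)]
    · simp [p]
    · intro k hk; simp [Finset.mem_range.1 hk]

theorem decomp (n : ℕ) (hn : 1 ≤ n) (p : ℝ[X]) : ∃ d q, IsDecomp n d p q := by
  induction p using Polynomial.induction_on' with
  | add p q hp hq =>
    obtain ⟨d, u, hu⟩ := hp
    obtain ⟨e, v, hv⟩ := hq
    obtain ⟨⟨a, ha⟩, h2, h3, h4⟩ := decomp_mono hu (le_max_left d e)
    obtain ⟨⟨b, hb⟩, k2, k3, k4⟩ := decomp_mono hv (le_max_right d e)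
    refine ⟨max d e, fun m => u m + v m, ⟨a + b, by simp [ha, hb]⟩, ?_, ?_, ?_⟩
    · intro m; rw [Lop_add, h2, k2]; ring
    · intro m hm; simp [h3 m hm, k3 m hm]
    · rw [Finset.sum_add_distrib, h4, k4]
  | monomial m a =>
    obtain ⟨q, ⟨b, hb⟩, h2, h3, h4⟩ := decomp_X n hn m
    refine ⟨m, fun k => C a * q k, ⟨a * b, by simp [hb]⟩, ?_, ?_, ?_⟩
    · intro m; rw [Lop_smul, h2]; ring
    · intro m hm; simp [h3 m hm]
    · rw [← Finset.mul_sum, h4, C_mul_X_pow_eq_monomial]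

instance sphereHaar_prob (n : ℕ) : IsProbabilityMeasure (sphereHaar n) := by
  constructor
  rw [sphereHaar, Measure.smul_apply, smul_eq_mul, ENNReal.inv_mul_cancel]
  · rw [Ne, Measure.measure_univ_eq_zero]
    exact Measure.toSphere_ne_zero _
  · exact measure_ne_top _ _

theorem toSphere_isometry {E : Type*} [NormedAddCommGroup E] [InnerProductSpace ℝ E]
    [FiniteDimensional ℝ E] [MeasurableSpace E] [BorelSpace E] (A : E ≃ₗᵢ[ℝ] E)
    (R : sphere (0:E) 1 → sphere (0:E) 1) (hR : ∀ x, (R x : E) = A x) :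
    MeasurePreserving R (volume : Measure E).toSphere (volume : Measure E).toSphere := by
  have hc : Continuous R := by
    rw [continuous_induced_rng]
    have : (Subtype.val ∘ R) = fun x : sphere (0:E) 1 => A x := by ext x; exact hR x
    rw [this]
    exact A.continuous.comp continuous_subtype_val
  refine ⟨hc.measurable, ?_⟩
  ext s hs
  rw [Measure.map_apply hc.measurable hs, Measure.toSphere_apply' _ (hc.measurable hs),
    Measure.toSphere_apply' _ hs]
  congr 1
  conv_rhs => rw [← (LinearIsometryEquiv.measurePreserving A).measure_preimage_equiv
    (f := A.toMeasurableEquiv)]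
  congr 1
  ext x
  simp only [Set.mem_smul, Set.mem_image, Set.mem_preimage]
  constructor
  · rintro ⟨r, hr, _, ⟨y, hy, rfl⟩, rfl⟩
    refine ⟨r, hr, _, ⟨R y, hy, rfl⟩, ?_⟩
    rw [hR]; exact (A.map_smul r (y:E)).symm
  · rintro ⟨r, hr, _, ⟨y, hy, rfl⟩, h⟩
    have hz : A.symm (y:E) ∈ sphere (0:E) 1 := by simp
    refine ⟨r, hr, _, ⟨⟨A.symm y, hz⟩, ?_, rfl⟩, ?_⟩
    · have : R ⟨A.symm y, hz⟩ = y := by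
        apply Subtype.ext; rw [hR]; simp
      simpa [this] using hy
    · have : x = A.symm (r • (y:E)) := by rw [h]; exact (A.symm_apply_apply x).symm
      rw [this]; simp

theorem exists_rotE {N : ℕ} (i j : Fin N) (hij : i ≠ j) (c s : ℝ) (hcs : c^2+s^2 = 1) :
    ∃ A : EuclideanSpace ℝ (Fin N) ≃ₗᵢ[ℝ] EuclideanSpace ℝ (Fin N), ∀ x,
      (A x) i = c * x i + s * x j ∧ (A x) j = c * x j - s * x i ∧ ∀ k, k ≠ i → k ≠ j → (A x) k = x k := by
  let T : EuclideanSpace ℝ (Fin N) →ₗ[ℝ] EuclideanSpace ℝ (Fin N) :=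
    { toFun := fun x => WithLp.toLp 2 (fun k => if k = i then c * x i + s * x j else
        if k = j then c * x j - s * x i else x k)
      map_add' := by
        intro x y; ext k; simp; split_ifs <;> ring
      map_smul' := by
        intro a x; ext k; simp; split_ifs <;> ring }
  have hT : ∀ x, (T x) i = c * x i + s * x j ∧ (T x) j = c * x j - s * x i ∧
      ∀ k, k ≠ i → k ≠ j → (T x) k = x k := by
    intro x
    refine ⟨by simp [T], by simp [T, hij.symm], ?_⟩
    intro k h1 h2; simp [T, h1, h2]
  have hn : ∀ x, ‖T x‖ = ‖x‖ := by
    intro x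
    rw [EuclideanSpace.norm_eq, EuclideanSpace.norm_eq]
    congr 1
    have hsplit : ∀ y : EuclideanSpace ℝ (Fin N), ∑ k, ‖y k‖^2 = 
        (y i)^2 + ((y j)^2 + ∑ k ∈ (Finset.univ.erase i).erase j, ‖y k‖^2) := by
      intro y
      rw [← Finset.add_sum_erase _ _ (Finset.mem_univ i), 
        ← Finset.add_sum_erase (Finset.univ.erase i) _ (Finset.mem_erase.2 ⟨hij.symm, Finset.mem_univ j⟩)]
      simp
    rw [hsplit, hsplit, (hT x).1, (hT x).2.1]
    rw [Finset.sum_congr rfl (g := fun k => ‖x k‖^2)]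
    · linear_combination ((x i)^2 + (x j)^2) * hcs
    · intro k hk
      simp only [Finset.mem_erase] at hk
      rw [(hT x).2.2 k hk.2.1 hk.1]
  exact ⟨LinearIsometry.toLinearIsometryEquiv ⟨T, hn⟩ rfl, hT⟩

theorem exists_rot (n : ℕ) (i j : Fin (n+1)) (hij : i ≠ j) (c s : ℝ) (hcs : c^2+s^2 = 1) :
    ∃ R : sphere (0 : EuclideanSpace ℝ (Fin (n + 1))) 1 → sphere (0 : EuclideanSpace ℝ (Fin (n + 1))) 1,
      MeasurePreserving R (sphereHaar n) (sphereHaar n) ∧ MeasurableEmbedding R ∧ ∀ x, 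
      (R x).1 i = c * x.1 i + s * x.1 j ∧ (R x).1 j = c * x.1 j - s * x.1 i ∧
        ∀ k, k ≠ i → k ≠ j → (R x).1 k = x.1 k := by
  obtain ⟨A, hA⟩ := exists_rotE i j hij c s hcs
  have hs : ∀ x : sphere (0 : EuclideanSpace ℝ (Fin (n + 1))) 1, A x.1 ∈ 
    sphere (0 : EuclideanSpace ℝ (Fin (n + 1))) 1 := by intro x; simp
  refine ⟨fun x => ⟨A x.1, hs x⟩, ?_, ?_, fun x => hA x⟩
  · exact (toSphere_isometry A _ (fun x => rfl)).smul_measure _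
  · refine Continuous.measurableEmbedding ?_ ?_
    · fun_prop
    · intro x y h
      exact Subtype.ext (A.injective (congrArg Subtype.val h))

abbrev Sph (n : ℕ) := sphere (0 : EuclideanSpace ℝ (Fin (n + 1))) 1

theorem sph_sum {n : ℕ} (x : Sph n) : ∑ i, (x.1 i)^2 = 1 := by
  have := x.2
  rw [mem_sphere_zero_iff_norm, EuclideanSpace.norm_eq, Real.sqrt_eq_one] at this
  simpa using this

theorem sph_le {n : ℕ} (x : Sph n) (i) : |x.1 i| ≤ 1 := by
  rw [← sq_le_one_iff_abs_le_one, ← sph_sum x]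
  exact Finset.single_le_sum (f := fun i => (x.1 i)^2) (fun _ _ => sq_nonneg _) (Finset.mem_univ i)

theorem sph_cont {n : ℕ} (i) : Continuous (fun x : Sph n => x.1 i) := by fun_prop

theorem cont_int {n : ℕ} {F : Sph n → ℝ} (hF : Continuous F) : Integrable F (sphereHaar n) :=
  hF.integrable_of_hasCompactSupport (HasCompactSupport.of_compactSpace F)

noncomputable def Dp (p : ℝ[X]) (x y : ℝ) : ℝ :=
  (derivative (derivative p)).eval x * y^2 - (derivative p).eval x * x

theorem Lop_eq_sum {n : ℕ} (p : ℝ[X]) (x : Sph n) (i) :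
    (Lop n p).eval (x.1 i) = ∑ j ∈ Finset.univ.erase i, Dp p (x.1 i) (x.1 j) := by
  have := sph_sum x
  rw [← Finset.add_sum_erase _ _ (Finset.mem_univ i)] at this
  simp only [Dp, Finset.sum_sub_distrib, ← Finset.mul_sum, Finset.sum_const]
  rw [eq_sub_of_add_eq' this]
  simp [Lop]
  ring

theorem Dp_cont {n : ℕ} (p : ℝ[X]) (i j) : Continuous (fun x : Sph n => Dp p (x.1 i) (x.1 j)) := by
  unfold Dp
  fun_prop

theorem exists_c {s : ℝ} (hs : 0 < s) (hs1 : s ≤ 1) : ∃ c : ℝ, 0 ≤ c ∧ c^2+s^2=1 :=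
  ⟨√(1-s^2), Real.sqrt_nonneg _, by rw [Real.sq_sqrt] <;> nlinarith⟩

theorem int_Dp (n : ℕ) (p : ℝ[X]) (i j : Fin (n+1)) (hij : i ≠ j) :
    ∫ x : Sph n, Dp p (x.1 i) (x.1 j) ∂(sphereHaar n) = 0 := by
  have key : ∀ p : ℝ[X], 0 ≤ ∫ x : Sph n, Dp p (x.1 i) (x.1 j) ∂(sphereHaar n) := by
    intro p
    obtain ⟨C, hC, H⟩ := poly_symm p
    apply limit_nonneg (C := C)
    intro s hs hs1
    obtain ⟨c, hc, hcs⟩ := exists_c hs hs1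
    obtain ⟨R, hR, hRe, hRx⟩ := exists_rot n i j hij c s hcs
    obtain ⟨R', hR', hRe', hRx'⟩ := exists_rot n i j hij c (-s) (by simpa using hcs)
    have e1 := hR.integral_comp hRe (fun x => p.eval (x.1 i))
    have e2 := hR'.integral_comp hRe' (fun x => p.eval (x.1 i))
    simp only [fun x => (hRx x).1] at e1
    simp only [fun x => (hRx' x).1, neg_mul, ← sub_eq_add_neg] at e2
    have : ∫ x : Sph n, (p.eval (c * x.1 i + s * x.1 j) + p.eval (c * x.1 i - s * x.1 j) -
        2 * p.eval (x.1 i)) ∂(sphereHaar n) = 0 := by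
      rw [integral_sub, integral_add, e1, e2, integral_const_mul]
      · ring
      all_goals apply cont_int; fun_prop
    rw [← this, ← integral_const_mul]
    have hc1 : C * s^3 = ∫ x : Sph n, C * s^3 ∂(sphereHaar n) := by simp
    rw [hc1, ← integral_add]
    · apply integral_mono
      · apply cont_int; fun_prop
      · apply cont_int; have := Dp_cont (n := n) p i j; fun_prop
      · intro x
        have := H (x.1 i) (x.1 j) s c (sph_le x i) (sph_le x j) hs.le hc hcs
        have := (abs_le.1 this).2
        simp only [Dp]
        linarith
    all_goals apply cont_int; have := Dp_cont (n := n) p i j; fun_prop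
  apply le_antisymm _ (key p)
  have := key (-p)
  have e : ∀ x y, Dp (-p) x y = - Dp p x y := by intro x y; simp [Dp]; ring
  simp only [e, integral_neg] at this
  linarith

theorem int_Lop (n : ℕ) (p : ℝ[X]) (i : Fin (n+1)) :
    ∫ x : Sph n, (Lop n p).eval (x.1 i) ∂(sphereHaar n) = 0 := by
  simp only [Lop_eq_sum]
  rw [integral_finsetSum]
  · apply Finset.sum_eq_zero
    intro j hj
    exact int_Dp n p i j (Finset.ne_of_mem_erase hj).symm
  · intro j _; exact cont_int (Dp_cont p i j)

noncomputable def Fp {n : ℕ} (f : Fin (n+1) → ℝ[X]) (x : Sph n) : ℝ := ∏ k, √((f k).eval (x.1 k))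

theorem Fp_cont {n : ℕ} (f : Fin (n+1) → ℝ[X]) : Continuous (Fp f) := by
  unfold Fp
  refine continuous_finsetProd _ fun k _ => ?_
  fun_prop

theorem Fp_split {n : ℕ} (f : Fin (n+1) → ℝ[X]) (i j : Fin (n+1)) (hij : i ≠ j) (x : Sph n) :
    Fp f x = √((f i).eval (x.1 i)) * (√((f j).eval (x.1 j)) *
      ∏ k ∈ (Finset.univ.erase i).erase j, √((f k).eval (x.1 k))) := by
  unfold Fp
  rw [← Finset.mul_prod_erase _ _ (Finset.mem_univ i), 
        ← Finset.mul_prod_erase (Finset.univ.erase i) _ (Finset.mem_erase.2 ⟨hij.symm, Finset.mem_univ j⟩)]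

theorem amgm {a b a' b' : ℝ} (ha : 0 < a) (hb : 0 < b) (ha' : 0 < a') (hb' : 0 < b') :
    √a' * √b' ≤ √a * √b * (a'/a + b'/b) / 2 := by
  obtain ⟨p, hp, rfl⟩ : ∃ p, 0 < p ∧ a = p^2 := ⟨√a, Real.sqrt_pos.2 ha, (Real.sq_sqrt ha.le).symm⟩
  obtain ⟨q, hq, rfl⟩ : ∃ p, 0 < p ∧ b = p^2 := ⟨√b, Real.sqrt_pos.2 hb, (Real.sq_sqrt hb.le).symm⟩
  obtain ⟨r, hr, rfl⟩ : ∃ p, 0 < p ∧ a' = p^2 := ⟨√a', Real.sqrt_pos.2 ha', (Real.sq_sqrt ha'.le).symm⟩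
  obtain ⟨s, hs, rfl⟩ : ∃ p, 0 < p ∧ b' = p^2 := ⟨√b', Real.sqrt_pos.2 hb', (Real.sq_sqrt hb'.le).symm⟩
  rw [Real.sqrt_sq hp.le, Real.sqrt_sq hq.le, Real.sqrt_sq hr.le, Real.sqrt_sq hs.le]
  have : p * q * (r^2/p^2 + s^2/q^2) / 2 - r * s = p * q * (r/p - s/q)^2 / 2 := by
    field_simp; ring
  have : 0 ≤ p * q * (r/p - s/q)^2 / 2 := by positivity
  linarith

def PosP {n : ℕ} (f : Fin (n+1) → ℝ[X]) : Prop := ∀ k, ∀ x : ℝ, |x| ≤ 1 → 0 < (f k).eval x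

theorem pair_rot {n : ℕ} (f : Fin (n+1) → ℝ[X]) (hf : PosP f) (i j : Fin (n+1)) (hij : i ≠ j)
    (c s : ℝ) (hcs : c^2+s^2 = 1) :
    ∫ x, Fp f x ∂(sphereHaar n) ≤ ∫ x : Sph n, Fp f x * 
      ((f i).eval (c * x.1 i + s * x.1 j) / (f i).eval (x.1 i) + 
       (f j).eval (c * x.1 j - s * x.1 i) / (f j).eval (x.1 j)) / 2 ∂(sphereHaar n) := by
  obtain ⟨R, hR, hRe, hRx⟩ := exists_rot n i j hij c s hcs
  rw [← hR.integral_comp hRe]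
  have h0 : ∀ k, ∀ x : Sph n, (f k).eval (x.1 k) ≠ 0 := fun k x => (hf k _ (sph_le x k)).ne'
  have hRc : Continuous (fun x : Sph n => Fp f (R x)) := by
    refine (Continuous.congr (f := fun x : Sph n => √((f i).eval (c * x.1 i + s * x.1 j)) *
      (√((f j).eval (c * x.1 j - s * x.1 i)) *
      ∏ k ∈ (Finset.univ.erase i).erase j, √((f k).eval (x.1 k)))) ?_ ?_)
    · fun_prop
    · intro x
      rw [Fp_split f i j hij, (hRx x).1, (hRx x).2.1]
      congr 2
      refine Finset.prod_congr rfl fun k hk => ?_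
      simp only [Finset.mem_erase] at hk
      rw [(hRx x).2.2 k hk.2.1 hk.1]
  apply integral_mono
  · exact cont_int hRc
  · apply cont_int
    have := Fp_cont f
    refine Continuous.div_const (this.mul (Continuous.add (Continuous.div (by fun_prop) (by fun_prop) (h0 i)) (Continuous.div (by fun_prop) (by fun_prop) (h0 j)))) _
  · intro x
    simp only
    rw [Fp_split f i j hij, Fp_split f i j hij]
    rw [← (hRx x).1, ← (hRx x).2.1]
    have e : ∏ k ∈ (Finset.univ.erase i).erase j, √((f k).eval ((R x).1 k)) = 
       ∏ k ∈ (Finset.univ.erase i).erase j, √((f k).eval (x.1 k)) := by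
      refine Finset.prod_congr rfl fun k hk => ?_
      simp only [Finset.mem_erase] at hk
      rw [(hRx x).2.2 k hk.2.1 hk.1]
    rw [e]
    have hW : 0 ≤ ∏ k ∈ (Finset.univ.erase i).erase j, √((f k).eval (x.1 k)) := 
      Finset.prod_nonneg fun _ _ => Real.sqrt_nonneg _
    have := mul_le_mul_of_nonneg_right (amgm (hf i _ (sph_le x i)) (hf j _ (sph_le x j))
      (hf i _ (sph_le (R x) i)) (hf j _ (sph_le (R x) j))) hW
    linarith

theorem pair_D {n : ℕ} (f : Fin (n+1) → ℝ[X]) (hf : PosP f) (i j : Fin (n+1)) (hij : i ≠ j) :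
    0 ≤ ∫ x : Sph n, Fp f x * (Dp (f i) (x.1 i) (x.1 j) / (f i).eval (x.1 i) +
      Dp (f j) (x.1 j) (x.1 i) / (f j).eval (x.1 j)) ∂(sphereHaar n) := by
  obtain ⟨C, hC, H⟩ := poly_symm (f i)
  obtain ⟨C', hC', H'⟩ := poly_symm (f j)
  have h0 : ∀ k, ∀ x : Sph n, (f k).eval (x.1 k) ≠ 0 := fun k x => (hf k _ (sph_le x k)).ne'
  have hF := Fp_cont f
  have hF0 : ∀ x, 0 ≤ Fp f x := fun x => Finset.prod_nonneg fun _ _ => Real.sqrt_nonneg _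
  apply limit_nonneg (C := ∫ x : Sph n, Fp f x * (C / (f i).eval (x.1 i) + C' / (f j).eval (x.1 j)) ∂(sphereHaar n))
  intro s hs hs1
  obtain ⟨c, hc, hcs⟩ := exists_c hs hs1
  have k1 := pair_rot f hf i j hij c s hcs
  have k2 := pair_rot f hf i j hij c (-s) (by simpa using hcs)
  have hd : ∀ {u v : Sph n → ℝ}, Continuous u → Continuous v → Integrable (fun x => Fp f x * 
      (u x / (f i).eval (x.1 i) + v x / (f j).eval (x.1 j))) (sphereHaar n) := by
    intro u v hu hv
    apply cont_int
    exact (hF.mul (Continuous.add (Continuous.div (by fun_prop) (by fun_prop) (h0 i)) (Continuous.div (by fun_prop) (by fun_prop) (h0 j))))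
  have i1 : Integrable (fun x : Sph n => Fp f x * 
      ((f i).eval (c * x.1 i + s * x.1 j) / (f i).eval (x.1 i) + 
       (f j).eval (c * x.1 j - s * x.1 i) / (f j).eval (x.1 j)) / 2) (sphereHaar n) :=
     (hd (by fun_prop) (by fun_prop)).div_const 2
  have i2 : Integrable (fun x : Sph n => Fp f x * 
      ((f i).eval (c * x.1 i + (-s) * x.1 j) / (f i).eval (x.1 i) + 
       (f j).eval (c * x.1 j - (-s) * x.1 i) / (f j).eval (x.1 j)) / 2) (sphereHaar n) :=
     (hd (by fun_prop) (by fun_prop)).div_const 2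
  have k3 := add_le_add k1 k2
  rw [← integral_add' (cont_int hF) (cont_int hF), ← integral_add' i1 i2] at k3
  rw [← sub_nonneg, ← integral_sub' (i1.add i2) ((cont_int hF).add (cont_int hF))] at k3
  rw [← integral_const_mul, mul_comm _ (s^3), ← integral_const_mul, ← integral_add]
  · have k4 := mul_nonneg (zero_le_two (α := ℝ)) k3
    rw [← integral_const_mul] at k4
    refine k4.trans (integral_mono ?_ ?_ ?_)
    · exact ((i1.add i2).sub ((cont_int hF).add (cont_int hF))).const_mul 2
    · exact ((hd (Dp_cont _ _ _) (Dp_cont _ _ _)).const_mul _).add ((hd continuous_const continuous_const).const_mul _)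
    · intro x
      simp only [Pi.add_apply, Pi.sub_apply]
      have q1 := (abs_le.1 (H (x.1 i) (x.1 j) s c (sph_le x i) (sph_le x j) hs.le hc hcs)).2
      have q2 := (abs_le.1 (H' (x.1 j) (x.1 i) s c (sph_le x j) (sph_le x i) hs.le hc hcs)).2
      change _ - s^2 * Dp (f i) (x.1 i) (x.1 j) ≤ _ at q1
      change _ - s^2 * Dp (f j) (x.1 j) (x.1 i) ≤ _ at q2
      have p1 := hf i _ (sph_le x i)
      have p2 := hf j _ (sph_le x j)
      rw [neg_mul, neg_mul, ← sub_eq_add_neg, sub_neg_eq_add]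
      have hx := hF0 x
      set F := Fp f x
      set a := (f i).eval (x.1 i)
      set b := (f j).eval (x.1 j)
      set a1 := (f i).eval (c * x.1 i + s * x.1 j)
      set a2 := (f i).eval (c * x.1 i - s * x.1 j)
      set b1 := (f j).eval (c * x.1 j + s * x.1 i)
      set b2 := (f j).eval (c * x.1 j - s * x.1 i)
      set D1 := Dp (f i) (x.1 i) (x.1 j)
      set D2 := Dp (f j) (x.1 j) (x.1 i)
      have e1 := mul_nonneg hx (div_nonneg (sub_nonneg.2 q1) p1.le)
      have e2 := mul_nonneg hx (div_nonneg (sub_nonneg.2 q2) p2.le)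
      have e3 : s^2 * (F * (D1/a + D2/b)) + s^3 * (F * (C/a+C'/b)) - 
         2 * (F * (a1/a+b2/b)/2 + F * (a2/a+b1/b)/2 - (F + F)) = 
         F * ((C * s^3 - (a1 + a2 - 2*a - s^2*D1))/a) + F * ((C' * s^3 - (b1 + b2 - 2*b - s^2*D2))/b) := by
        field_simp; ring
      linarith
  · exact ((hd (Dp_cont _ _ _) (Dp_cont _ _ _)).const_mul _)
  · exact ((hd continuous_const continuous_const).const_mul _)

theorem L_nonneg {n : ℕ} (f : Fin (n+1) → ℝ[X]) (hf : PosP f) :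
    0 ≤ ∫ x : Sph n, Fp f x * ∑ i, (Lop n (f i)).eval (x.1 i) / (f i).eval (x.1 i) ∂(sphereHaar n) := by
  have h0 : ∀ k, ∀ x : Sph n, (f k).eval (x.1 k) ≠ 0 := fun k x => (hf k _ (sph_le x k)).ne'
  have hF := Fp_cont f
  have h1 : 0 ≤ ∑ i, ∑ j, if i ≠ j then ∫ x : Sph n, Fp f x * (Dp (f i) (x.1 i) (x.1 j) / (f i).eval (x.1 i) +
      Dp (f j) (x.1 j) (x.1 i) / (f j).eval (x.1 j)) ∂(sphereHaar n) else 0 := by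
    refine Finset.sum_nonneg fun i _ => Finset.sum_nonneg fun j _ => ?_
    split_ifs with h
    · exact pair_D f hf i j h
    · exact le_rfl
  have hIntg : ∀ i j, Integrable (fun x : Sph n => Fp f x * (Dp (f i) (x.1 i) (x.1 j) / (f i).eval (x.1 i))) (sphereHaar n) := by
    intro i j
    exact cont_int (hF.mul ((Dp_cont _ i j).div (by fun_prop) (h0 i)))
  let A : Fin (n+1) → Fin (n+1) → ℝ := fun i j => ∫ x : Sph n, Fp f x * (Dp (f i) (x.1 i) (x.1 j) / (f i).eval (x.1 i)) ∂(sphereHaar n)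
  have h2 : ∑ i, ∑ j, (if i ≠ j then ∫ x : Sph n, Fp f x * (Dp (f i) (x.1 i) (x.1 j) / (f i).eval (x.1 i) +
      Dp (f j) (x.1 j) (x.1 i) / (f j).eval (x.1 j)) ∂(sphereHaar n) else 0) =
      2 * ∑ i, ∑ j ∈ Finset.univ.erase i, A i j := by
    have e1 : ∀ i, ∑ j ∈ Finset.univ.erase i, A i j = ∑ j, if i ≠ j then A i j else 0 := by
      intro i
      rw [← Finset.sum_filter]
      congr 1
      ext j; simp [eq_comm]
    have e2 : ∑ i, ∑ j, (if i ≠ j then A j i else 0) = ∑ i, ∑ j, (if i ≠ j then A i j else 0) := by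
      rw [Finset.sum_comm]
      simp only [ne_comm]
    simp only [e1]
    rw [two_mul]
    nth_rw 2 [← e2]
    rw [← Finset.sum_add_distrib]
    refine Finset.sum_congr rfl fun i _ => ?_
    rw [← Finset.sum_add_distrib]
    refine Finset.sum_congr rfl fun j _ => ?_
    split_ifs
    · simp only [mul_add]
      rw [integral_add (hIntg i j) (hIntg j i)]
    · simp
  have h3 : ∫ x : Sph n, Fp f x * ∑ i, (Lop n (f i)).eval (x.1 i) / (f i).eval (x.1 i) ∂(sphereHaar n)
     = ∑ i, ∑ j ∈ Finset.univ.erase i, A i j := by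
    simp only [Lop_eq_sum, Finset.sum_div, Finset.mul_sum]
    rw [integral_finsetSum]
    · refine Finset.sum_congr rfl fun i _ => ?_
      rw [integral_finsetSum]
      intro j _; exact hIntg i j
    · intro i _
      exact integrable_finsetSum _ fun j _ => hIntg i j
  rw [h3]
  linarith

noncomputable def flow (n d : ℕ) (q : ℕ → ℝ[X]) (t : ℝ) : ℝ[X] :=
  ∑ m ∈ Finset.range (d+1), C (Real.exp (-lam n m * t)) * q m

theorem flow_eval (n d q t x) : (flow n d q t).eval x = 
    ∑ m ∈ Finset.range (d+1), Real.exp (-lam n m * t) * (q m).eval x := by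
  simp [flow, eval_finsetSum]

theorem flow_Lop_eval {n d p q} (h : IsDecomp n d p q) (t x) : (Lop n (flow n d q t)).eval x = 
    ∑ m ∈ Finset.range (d+1), Real.exp (-lam n m * t) * (-lam n m) * (q m).eval x := by
  simp only [flow, Lop_sum, Lop_smul, h.2.1, eval_finsetSum, eval_mul, eval_C]
  refine Finset.sum_congr rfl fun m _ => by ring

theorem flow_deriv {n d p q} (h : IsDecomp n d p q) (t x) :
    HasDerivAt (fun t => (flow n d q t).eval x) ((Lop n (flow n d q t)).eval x) t := by
  rw [flow_Lop_eval h]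
  simp only [flow_eval]
  refine HasDerivAt.fun_sum fun m _ => HasDerivAt.mul_const ?_ _
  have : HasDerivAt (fun t => -lam n m * t) (-lam n m) t := by
    simpa using (hasDerivAt_id t).const_mul (-lam n m)
  exact this.exp

theorem flow_zero {n d p q} (h : IsDecomp n d p q) : flow n d q 0 = p := by
  simp [flow, h.2.2.2]

theorem flow_cont (n d q) : Continuous (fun z : ℝ × ℝ => (flow n d q z.1).eval z.2) := by
  simp only [flow_eval]
  fun_prop

theorem flow_Lop_cont {n d p q} (h : IsDecomp n d p q) :
    Continuous (fun z : ℝ × ℝ => (Lop n (flow n d q z.1)).eval z.2) := by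
  simp only [flow_Lop_eval h]
  fun_prop

theorem flow_ge {n d p q} (hn : 1 ≤ n) (h : IsDecomp n d p q) {δ : ℝ}
    (hδ : ∀ x : ℝ, |x| ≤ 1 → δ ≤ p.eval x) {t x : ℝ} (ht : 0 ≤ t) (hx : |x| ≤ 1) :
    δ ≤ (flow n d q t).eval x := by
  have key : ∀ ε : ℝ, 0 < ε → δ ≤ (flow n d q t).eval x + ε * t := by
    intro ε hε
    obtain ⟨⟨τ, y⟩, ⟨hτ, hy⟩, hmin⟩ := (isCompact_Icc (a := (0:ℝ)) (b := t)).prod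
      (isCompact_Icc (a := (-1:ℝ)) (b := 1)) |>.exists_isMinOn ⟨(0, 0), by simp [ht]⟩
      (f := fun z : ℝ × ℝ => (flow n d q z.1).eval z.2 + ε * z.1)
      (((flow_cont n d q).add (by fun_prop)).continuousOn)
    simp only at hτ hy
    have hmin' : ∀ τ' y', 0 ≤ τ' → τ' ≤ t → |y'| ≤ 1 → 
        (flow n d q τ).eval y + ε * τ ≤ (flow n d q τ').eval y' + ε * τ' := by
      intro τ' y' h1 h2 h3
      exact hmin (show (τ', y') ∈ _ from ⟨⟨h1, h2⟩, by simpa [abs_le] using h3⟩)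
    refine le_trans ?_ (hmin' t x ht le_rfl hx)
    have hy' : |y| ≤ 1 := by simpa [abs_le] using hy
    rcases hτ.1.eq_or_lt with h0 | h0
    · rw [← h0, flow_zero h]
      simpa using hδ y hy'
    · exfalso
      have hL : 0 ≤ (Lop n (flow n d q τ)).eval y := by
        apply Lop_min n hn _ _ hy'
        intro y' hy1
        have := hmin' τ y' hτ.1 hτ.2 hy1
        linarith
      have hd : HasDerivAt (fun τ => (flow n d q τ).eval y + ε * τ) 
          ((Lop n (flow n d q τ)).eval y + ε * 1) τ := 
        (flow_deriv h τ y).add ((hasDerivAt_id τ).const_mul ε)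
      rw [hasDerivAt_iff_tendsto_slope] at hd
      have h1 := (hd.mono_left (nhdsWithin_mono τ (t := {τ}ᶜ) (s := Set.Iio τ)
        (fun z hz => (Set.mem_Iio.1 hz).ne))).eventually (lt_mem_nhds (show 0 < _ by linarith))
      have h2 : ∀ᶠ z in nhdsWithin τ (Set.Iio τ), 0 < z := 
        (lt_mem_nhds h0).filter_mono nhdsWithin_le_nhds
      obtain ⟨z, ⟨hz1, hz2⟩, hz3⟩ := ((h1.and h2).and self_mem_nhdsWithin).exists
      replace hz3 : z < τ := hz3
      have := hmin' z y hz2.le (hz3.le.trans hτ.2) hy'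
      rw [slope_def_field] at hz1
      have : ((flow n d q z).eval y + ε * z - ((flow n d q τ).eval y + ε * τ)) / (z - τ) ≤ 0 :=
        div_nonpos_of_nonneg_of_nonpos (by linarith) (by linarith)
      linarith
  refine le_of_forall_pos_le_add fun e he => ?_
  have := key (e / (t+1)) (by positivity)
  refine this.trans ?_
  have : e / (t+1) * t ≤ e := by
    rw [div_mul_eq_mul_div, div_le_iff₀ (by positivity)]; nlinarith
  linarith

theorem poly_ineq {n : ℕ} (hn : 1 ≤ n) (f : Fin (n+1) → ℝ[X]) (hf : PosP f) :
    ∫ x, Fp f x ∂(sphereHaar n) ≤ ∏ k, √(∫ x : Sph n, (f k).eval (x.1 k) ∂(sphereHaar n)) := by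
  choose d q hq using fun k => decomp n hn (f k)
  choose a ha using fun k => (hq k).1
  let u : ℝ → Fin (n+1) → ℝ[X] := fun t k => flow n (d k) (q k) t
  have upos : ∀ t, 0 ≤ t → PosP (u t) := by
    intro t ht k x hx
    obtain ⟨y, hy, hmin⟩ := (isCompact_Icc (a := (-1:ℝ)) (b := 1)).exists_isMinOn ⟨0, by simp⟩
      (f := fun x => (f k).eval x) (Polynomial.continuous _).continuousOn
    refine (hf k y (by simpa [abs_le] using hy)).trans_le (flow_ge hn (hq k) ?_ ht hx)
    intro z hz
    exact hmin (show z ∈ _ by simpa [abs_le] using hz)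
  have hIntg : ∀ k, ∫ x : Sph n, (f k).eval (x.1 k) ∂(sphereHaar n) = a k := by
    intro k
    have hz : ∀ m, ∫ x : Sph n, (q k (m+1)).eval (x.1 k) ∂(sphereHaar n) = 0 := by
      intro m
      have := int_Lop n (q k (m+1)) k
      rw [(hq k).2.1] at this
      simp only [eval_mul, eval_C, integral_const_mul] at this
      have h2 : lam n 0 < lam n (m+1) := lam_lt n hn (Nat.succ_pos m)
      have h3 : lam n 0 = 0 := by simp [lam]
      rcases mul_eq_zero.1 this with h | h
      · linarith
      · exact h
    rw [← (hq k).2.2.2]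
    simp only [eval_finsetSum]
    rw [integral_finsetSum]
    · rw [Finset.sum_range_succ']
      simp [hz, ha]
    · intro m _; apply cont_int; fun_prop
  let J : ℝ → ℝ := fun t => ∫ x, Fp (u t) x ∂(sphereHaar n)
  have ucont : ∀ k, Continuous (fun z : ℝ × Sph n => (u z.1 k).eval (z.2.1 k)) := fun k =>
    (flow_cont n (d k) (q k)).comp (f := fun z : ℝ × Sph n => (z.1, z.2.1 k)) (by fun_prop)
  have Lcont : ∀ k, Continuous (fun z : ℝ × Sph n => (Lop n (u z.1 k)).eval (z.2.1 k)) := fun k =>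
    (flow_Lop_cont (hq k)).comp (f := fun z : ℝ × Sph n => (z.1, z.2.1 k)) (by fun_prop)
  have Fcont : Continuous (fun z : ℝ × Sph n => Fp (u z.1) z.2) := by
    unfold Fp
    exact continuous_finsetProd _ fun k _ => (ucont k).sqrt
  have Jcont : Continuous J := by
    have := continuous_parametric_integral_of_continuous (μ := sphereHaar n) (s := Set.univ)
      (f := fun t x => Fp (u t) x) Fcont isCompact_univ
    simpa using this
  let F' : ℝ → Sph n → ℝ := fun t x => 
    (Fp (u t) x * ∑ i, (Lop n (u t i)).eval (x.1 i) / (u t i).eval (x.1 i)) * (1/2)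
  have F'cont : ContinuousOn (fun z : ℝ × Sph n => F' z.1 z.2) (Set.Ici 0 ×ˢ Set.univ) := by
    refine (Fcont.continuousOn.mul ?_).mul continuousOn_const
    refine continuousOn_finsetSum _ fun k _ => ?_
    refine (Lcont k).continuousOn.div (ucont k).continuousOn ?_
    rintro ⟨t, x⟩ ⟨ht, _⟩
    exact (upos t ht k _ (sph_le x k)).ne'
  have hder : ∀ t, 0 ≤ t → ∀ x, HasDerivAt (fun t => Fp (u t) x) (F' t x) t := by
    intro t ht x
    have h1 : ∀ k ∈ Finset.univ, HasDerivAt (fun t => √((u t k).eval (x.1 k)))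
        ((Lop n (u t k)).eval (x.1 k) / (2 * √((u t k).eval (x.1 k)))) t := fun k _ =>
      (flow_deriv (hq k) t (x.1 k)).sqrt (upos t ht k _ (sph_le x k)).ne'
    have h2 := HasDerivAt.fun_finsetProd h1
    refine h2.congr_deriv ?_
    simp only [F', Fp, Finset.mul_sum, Finset.sum_mul]
    refine Finset.sum_congr rfl fun k hk => ?_
    rw [← Finset.mul_prod_erase _ _ hk]
    have hp := upos t ht k _ (sph_le x k)
    have hs := Real.sqrt_pos.2 hp
    have hss := Real.sq_sqrt hp.le
    set r := √((u t k).eval (x.1 k))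
    rw [← hss, smul_eq_mul]
    field_simp
  have Jder : ∀ t, 0 < t → HasDerivAt J (∫ x, F' t x ∂(sphereHaar n)) t := by
    intro t ht
    obtain ⟨M, hM⟩ := ((isCompact_Icc (a := (0:ℝ)) (b := 2*t)).prod
      (isCompact_univ (X := Sph n))).exists_bound_of_continuousOn 
      (F'cont.mono (Set.prod_mono (fun z hz => hz.1) le_rfl))
    refine (hasDerivAt_integral_of_dominated_loc_of_deriv_le (s := Set.Ioo 0 (2*t)) (bound := fun _ => M)
      (Ioo_mem_nhds ht (by linarith)) ?_ ?_ ?_ ?_ ?_ ?_).2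
    · exact Filter.Eventually.of_forall fun τ => (Fp_cont _).aestronglyMeasurable
    · exact cont_int (Fp_cont _)
    · have : Continuous (F' t) := by
        rw [← continuousOn_univ]
        exact F'cont.comp (f := fun x => (t, x)) (by fun_prop) (fun x _ => ⟨ht.le, trivial⟩)
      exact this.aestronglyMeasurable
    · refine Filter.Eventually.of_forall fun x τ hτ => ?_
      exact hM (τ, x) ⟨⟨hτ.1.le, hτ.2.le⟩, trivial⟩
    · exact integrable_const _
    · exact Filter.Eventually.of_forall fun x τ hτ => hder τ hτ.1.le x
  have Jmono : MonotoneOn J (Set.Ici 0) := by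
    refine monotoneOn_of_deriv_nonneg (convex_Ici 0) Jcont.continuousOn ?_ ?_
    · intro t ht
      rw [interior_Ici] at ht
      exact (Jder t ht).differentiableAt.differentiableWithinAt
    · intro t ht
      rw [interior_Ici] at ht
      rw [(Jder t ht).deriv]
      simp only [F', integral_mul_const]
      have := L_nonneg (u t) (upos t (le_of_lt ht))
      positivity
  have Jlim : Filter.Tendsto J Filter.atTop (nhds (∏ k, √(a k))) := by
    have e : ∏ k, √(a k) = ∫ x : Sph n, ∏ k, √(a k) ∂(sphereHaar n) := by simp
    rw [e]
    refine tendsto_integral_filter_of_dominated_convergence 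
      (fun x => ∏ k, √(∑ m ∈ Finset.range (d k + 1), |(q k m).eval (x.1 k)|)) ?_ ?_ ?_ ?_
    · exact Filter.Eventually.of_forall fun τ => (Fp_cont _).aestronglyMeasurable
    · filter_upwards [Filter.eventually_ge_atTop 0] with t ht
      refine Filter.Eventually.of_forall fun x => ?_
      unfold Fp
      rw [Real.norm_of_nonneg (Finset.prod_nonneg fun _ _ => Real.sqrt_nonneg _)]
      refine Finset.prod_le_prod (fun _ _ => Real.sqrt_nonneg _) fun k _ => Real.sqrt_le_sqrt ?_
      simp only [u, flow_eval]
      refine Finset.sum_le_sum fun m _ => ?_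
      have h0 : 0 ≤ lam n m := by
        rcases Nat.eq_zero_or_pos m with h | h
        · simp [h, lam]
        · have := lam_lt n hn h
          have h3 : lam n 0 = 0 := by simp [lam]
          linarith
      have h1 : Real.exp (-lam n m * t) ≤ 1 := Real.exp_le_one_iff.2 (by nlinarith)
      calc _ ≤ Real.exp (-lam n m * t) * |(q k m).eval (x.1 k)| := by gcongr; exact le_abs_self _
        _ ≤ 1 * |(q k m).eval (x.1 k)| := by gcongr
        _ = _ := one_mul _
    · apply cont_int
      fun_prop
    · refine Filter.Eventually.of_forall fun x => ?_
      refine tendsto_finsetProd _ fun k _ => ?_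
      refine (Real.continuous_sqrt.tendsto _).comp ?_
      simp only [u, flow_eval, Finset.sum_range_succ']
      have h1 : Filter.Tendsto (fun t => ∑ m ∈ Finset.range (d k), Real.exp (-lam n (m+1) * t) *
         (q k (m+1)).eval (x.1 k)) Filter.atTop (nhds (∑ m ∈ Finset.range (d k), 0 * (q k (m+1)).eval (x.1 k))) := by
        refine tendsto_finsetSum _ fun m _ => Filter.Tendsto.mul_const _ ?_
        have h2 : lam n 0 < lam n (m+1) := lam_lt n hn (Nat.succ_pos m)
        have h3 : lam n 0 = 0 := by simp [lam]
        refine Real.tendsto_exp_atBot.comp ?_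
        exact Filter.tendsto_id.const_mul_atTop_of_neg (by linarith)
      have h3 : lam n 0 = 0 := by simp [lam]
      have h4 := h1.add_const (Real.exp (-lam n 0 * 0) * (q k 0).eval (x.1 k))
      simpa [h3, ha] using h4
  simp only [hIntg]
  have h0 : ∫ x, Fp f x ∂(sphereHaar n) = J 0 := by
    simp only [J, u, fun k => flow_zero (hq k)]
  rw [h0]
  refine ge_of_tendsto Jlim ?_
  filter_upwards [Filter.eventually_ge_atTop 0] with t ht
  exact Jmono (Set.self_mem_Ici) ht ht

theorem cont_ineq_real {n : ℕ} (hn : 1 ≤ n) (φ : Fin (n+1) → ℝ → ℝ) (hc : ∀ k, Continuous (φ k))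
    (h0 : ∀ k x, 0 ≤ φ k x) :
    ∫ x : Sph n, ∏ k, φ k (x.1 k) ∂(sphereHaar n) ≤ 
      ∏ k, √(∫ x : Sph n, (φ k (x.1 k))^2 ∂(sphereHaar n)) := by
  have key : ∀ ε : ℝ, 0 < ε → ∫ x : Sph n, ∏ k, φ k (x.1 k) ∂(sphereHaar n) ≤ 
      ∏ k, √(∫ x : Sph n, (φ k (x.1 k))^2 ∂(sphereHaar n) + 2 * ε) := by
    intro ε hε
    choose p hp using fun k => exists_polynomial_near_of_continuousOn (-1) 1
      (fun x => (φ k x)^2 + ε) (((hc k).pow 2).add continuous_const).continuousOn ε hε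
    have hl : ∀ k x, |x| ≤ 1 → (φ k x)^2 < (p k).eval x := by
      intro k x hx
      have := (abs_lt.1 (hp k x (by simpa [abs_le] using hx))).1
      linarith
    have hu : ∀ k x, |x| ≤ 1 → (p k).eval x ≤ (φ k x)^2 + 2 * ε := by
      intro k x hx
      have := (abs_lt.1 (hp k x (by simpa [abs_le] using hx))).2
      linarith
    have hpos : PosP p := fun k x hx => (sq_nonneg _).trans_lt (hl k x hx)
    refine le_trans ?_ ((poly_ineq hn p hpos).trans ?_)
    · refine integral_mono (cont_int (by fun_prop)) (cont_int (Fp_cont p)) fun x => ?_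
      refine Finset.prod_le_prod (fun k _ => h0 k _) fun k _ => ?_
      exact Real.le_sqrt_of_sq_le (hl k _ (sph_le x k)).le
    · refine Finset.prod_le_prod (fun _ _ => Real.sqrt_nonneg _) fun k _ => Real.sqrt_le_sqrt ?_
      have e : 2 * ε = ∫ x : Sph n, 2 * ε ∂(sphereHaar n) := by simp
      rw [e, ← integral_add (cont_int (by fun_prop)) (integrable_const _)]
      exact integral_mono (cont_int (by fun_prop)) (cont_int (by fun_prop)) 
        fun x => hu k _ (sph_le x k)
  have hlim : Filter.Tendsto (fun ε : ℝ => ∏ k, √(∫ x : Sph n, (φ k (x.1 k))^2 ∂(sphereHaar n) + 2 * ε))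
      (nhdsWithin 0 (Set.Ioi 0)) (nhds (∏ k, √(∫ x : Sph n, (φ k (x.1 k))^2 ∂(sphereHaar n) + 2 * 0))) := by
    refine Filter.Tendsto.mono_left (Continuous.tendsto ?_ _) nhdsWithin_le_nhds
    fun_prop
  simp only [mul_zero, add_zero] at hlim
  refine ge_of_tendsto hlim ?_
  filter_upwards [self_mem_nhdsWithin] with ε hε using key ε hε

theorem cont_ineq {n : ℕ} (hn : 1 ≤ n) (φ : Fin (n+1) → ℝ → ℝ) (hc : ∀ k, Continuous (φ k))
    (h0 : ∀ k x, 0 ≤ φ k x) :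
    ∫⁻ x : Sph n, ∏ k, ENNReal.ofReal (φ k (x.1 k)) ∂(sphereHaar n) ≤ 
      ∏ k, (∫⁻ x : Sph n, (ENNReal.ofReal (φ k (x.1 k)))^2 ∂(sphereHaar n)) ^ ((1:ℝ)/2) := by
  have h := ENNReal.ofReal_le_ofReal (cont_ineq_real hn φ hc h0)
  rw [ofReal_integral_eq_lintegral_ofReal (cont_int (by fun_prop)) 
    (Filter.Eventually.of_forall fun x => Finset.prod_nonneg fun k _ => h0 k _),
    ENNReal.ofReal_prod_of_nonneg (fun _ _ => Real.sqrt_nonneg _)] at h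
  convert h using 3 with x k hk
  · rw [ENNReal.ofReal_prod_of_nonneg (fun k _ => h0 k _)]
  · rw [Real.sqrt_eq_rpow, ← ENNReal.ofReal_rpow_of_nonneg (integral_nonneg fun x => sq_nonneg _) (by norm_num),
      ofReal_integral_eq_lintegral_ofReal (cont_int (by fun_prop)) 
      (Filter.Eventually.of_forall fun x => sq_nonneg _)]
    simp only [ENNReal.ofReal_pow (h0 k _)]

theorem ext_bdd (μ ν : Measure ℝ) [IsFiniteMeasure μ] [IsFiniteMeasure ν] (C : ℝ≥0∞) (hC : C ≠ ∞)
    (h : ∀ φ : ℝ → ℝ, Continuous φ → (∀ x, 0 ≤ φ x) →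
      ∫⁻ x, ENNReal.ofReal (φ x) ∂μ ≤ C * (∫⁻ x, (ENNReal.ofReal (φ x))^2 ∂ν)^((1:ℝ)/2))
    (g : ℝ → ℝ≥0∞) (hg : Measurable g) (M : ℝ≥0∞) (hM : M ≠ ∞) (hgM : ∀ x, g x ≤ M) :
    ∫⁻ x, g x ∂μ ≤ C * (∫⁻ x, (g x)^2 ∂ν)^((1:ℝ)/2) := by
  have n2 : ∀ (u : ℝ → ℝ) (ρ : Measure ℝ), eLpNorm u 2 ρ = (∫⁻ x, ‖u x‖ₑ^2 ∂ρ)^((1:ℝ)/2) := by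
    intro u ρ
    rw [eLpNorm_eq_lintegral_rpow_enorm_toReal (by simp) (by simp)]
    simp
  let g0 : ℝ → ℝ := fun x => (g x).toReal
  have hgt : ∀ x, g x ≠ ∞ := fun x => ne_top_of_le_ne_top hM (hgM x)
  have hg0 : ∀ x, ‖g0 x‖ₑ = g x := by
    intro x
    simp only [g0]
    rw [Real.enorm_eq_ofReal ENNReal.toReal_nonneg, ENNReal.ofReal_toReal (hgt x)]
  have hg0m : Measurable g0 := hg.ennreal_toReal
  have hmem : MemLp g0 2 (μ + ν) := by
    refine MemLp.of_bound hg0m.aestronglyMeasurable M.toReal (Filter.Eventually.of_forall fun x => ?_)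
    rw [Real.norm_of_nonneg ENNReal.toReal_nonneg]
    exact ENNReal.toReal_mono hM (hgM x)
  have key : ∀ ε : ℝ≥0∞, ε ≠ 0 → ∫⁻ x, g x ∂μ ≤ 
      C * ((∫⁻ x, (g x)^2 ∂ν)^((1:ℝ)/2) + ε) + ε * (μ Set.univ)^((1:ℝ)/2) := by
    intro ε hε
    obtain ⟨φ, φcont, hφ⟩ : ∃ φ : ℝ → ℝ, Continuous φ ∧ eLpNorm (g0 - φ) 2 (μ + ν) ≤ ε := by
      obtain ⟨φ, hφ, _⟩ := hmem.exists_boundedContinuous_eLpNorm_sub_le ENNReal.ofNat_ne_top hε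
      exact ⟨φ, φ.continuous, hφ⟩
    have d1 : eLpNorm (g0 - φ) 2 μ ≤ ε := 
      (eLpNorm_mono_measure _ (Measure.le_add_right le_rfl)).trans hφ
    have d2 : eLpNorm (φ - g0) 2 ν ≤ ε := by
      rw [eLpNorm_sub_comm]
      exact (eLpNorm_mono_measure _ (Measure.le_add_left le_rfl)).trans hφ
    have φm : ∀ ρ : Measure ℝ, AEStronglyMeasurable φ ρ := fun ρ => φcont.aestronglyMeasurable
    have e1 : ∫⁻ x, g x ∂μ = eLpNorm g0 1 μ := by
      rw [eLpNorm_one_eq_lintegral_enorm]; simp only [hg0]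
    have e2 : eLpNorm φ 1 μ ≤ C * eLpNorm φ 2 ν := by
      rw [eLpNorm_one_eq_lintegral_enorm, n2]
      have := h (fun x => |φ x|) (by fun_prop) (fun x => abs_nonneg _)
      simpa only [Real.enorm_eq_ofReal_abs] using this
    have e3 : eLpNorm φ 2 ν ≤ (∫⁻ x, (g x)^2 ∂ν)^((1:ℝ)/2) + ε := by
      have : φ = g0 + (φ - g0) := by simp
      rw [this]
      refine (eLpNorm_add_le hg0m.aestronglyMeasurable ((φm ν).sub hg0m.aestronglyMeasurable) (by simp)).trans ?_
      refine add_le_add (le_of_eq ?_) d2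
      rw [n2]; simp only [hg0]
    have e4 : eLpNorm g0 1 μ ≤ eLpNorm φ 1 μ + eLpNorm (g0 - φ) 1 μ := by
      have : g0 = φ + (g0 - φ) := by simp
      conv_lhs => rw [this]
      exact eLpNorm_add_le (φm μ) (hg0m.aestronglyMeasurable.sub (φm μ)) le_rfl
    have e5 : eLpNorm (g0 - φ) 1 μ ≤ ε * (μ Set.univ)^((1:ℝ)/2) := by
      refine (eLpNorm_le_eLpNorm_mul_rpow_measure_univ (q := 2) (by norm_num) 
        (hg0m.aestronglyMeasurable.sub (φm μ))).trans ?_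
      have : (1 / (1:ℝ≥0∞).toReal - 1 / (2:ℝ≥0∞).toReal) = (1:ℝ)/2 := by norm_num
      rw [this]
      gcongr
    rw [e1]
    refine e4.trans (add_le_add (e2.trans ?_) e5)
    gcongr
  have hlim : Filter.Tendsto (fun ε : ℝ≥0∞ => C * ((∫⁻ x, (g x)^2 ∂ν)^((1:ℝ)/2) + ε) + ε * (μ Set.univ)^((1:ℝ)/2))
      (nhdsWithin 0 (Set.Ioi 0)) (nhds (C * ((∫⁻ x, (g x)^2 ∂ν)^((1:ℝ)/2) + 0) + 0 * (μ Set.univ)^((1:ℝ)/2))) := by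
    have hid : Filter.Tendsto (fun ε : ℝ≥0∞ => ε) (nhdsWithin 0 (Set.Ioi 0)) (nhds 0) :=
      Filter.tendsto_id.mono_left nhdsWithin_le_nhds
    refine Filter.Tendsto.add ?_ ?_
    · exact ENNReal.Tendsto.const_mul (hid.const_add _) (Or.inr hC)
    · refine ENNReal.Tendsto.mul_const hid (Or.inr ?_)
      exact ENNReal.rpow_ne_top_of_nonneg (by norm_num) (measure_ne_top _ _)
  simp only [add_zero, zero_mul] at hlim
  refine ge_of_tendsto hlim ?_
  filter_upwards [self_mem_nhdsWithin] with ε hε using key ε (ne_of_gt hε)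

theorem ext_meas (μ ν : Measure ℝ) [IsFiniteMeasure ν] (C : ℝ≥0∞) (hC : C ≠ ∞)
    (h : ∀ φ : ℝ → ℝ, Continuous φ → (∀ x, 0 ≤ φ x) →
      ∫⁻ x, ENNReal.ofReal (φ x) ∂μ ≤ C * (∫⁻ x, (ENNReal.ofReal (φ x))^2 ∂ν)^((1:ℝ)/2))
    (g : ℝ → ℝ≥0∞) (hg : Measurable g) :
    ∫⁻ x, g x ∂μ ≤ C * (∫⁻ x, (g x)^2 ∂ν)^((1:ℝ)/2) := by
  have : IsFiniteMeasure μ := by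
    constructor
    have := h (fun _ => 1) continuous_const (fun _ => zero_le_one)
    simp only [ENNReal.ofReal_one, lintegral_one, one_pow] at this
    refine this.trans_lt (ENNReal.mul_lt_top hC.lt_top ?_)
    exact (ENNReal.rpow_ne_top_of_nonneg (by norm_num) (measure_ne_top _ _)).lt_top
  have e : ∀ x, g x = ⨆ k : ℕ, min (g x) k := by
    intro x
    rw [← inf_iSup_eq, ENNReal.iSup_natCast, inf_top_eq]
  have e2 : ∫⁻ x, g x ∂μ = ⨆ k : ℕ, ∫⁻ x, min (g x) k ∂μ := by
    rw [← lintegral_iSup]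
    · exact lintegral_congr e
    · intro k; exact hg.min measurable_const
    · intro a b hab x
      simp only
      gcongr
  rw [e2]
  refine iSup_le fun k => ?_
  refine (ext_bdd μ ν C hC h (fun x => min (g x) k) (hg.min measurable_const) k (by simp) 
    (fun x => min_le_right _ _)).trans ?_
  gcongr
  exact min_le_left _ _

theorem bl_induct {n : ℕ} (hn : 1 ≤ n) (s : Finset (Fin (n+1))) :
    ∀ g : Fin (n+1) → ℝ → ℝ≥0∞, (∀ i, Measurable (g i)) → 
    (∀ i, i ∉ s → ∃ φ : ℝ → ℝ, Continuous φ ∧ (∀ x, 0 ≤ φ x) ∧ g i = fun x => ENNReal.ofReal (φ x)) →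
    ∫⁻ x : Sph n, ∏ k, g k (x.1 k) ∂(sphereHaar n) ≤ 
      ∏ k, (∫⁻ x : Sph n, (g k (x.1 k))^2 ∂(sphereHaar n)) ^ ((1:ℝ)/2) := by
  classical
  induction s using Finset.induction_on with
  | empty =>
    intro g hg h
    choose φ hc h0 he using fun i => h i (Finset.notMem_empty i)
    simp only [he]
    exact cont_ineq hn φ hc h0
  | insert a s has ih =>
    intro g hg h
    have mx : ∀ k, Measurable (fun x : Sph n => x.1 k) := fun k => (sph_cont k).measurable
    let W : Sph n → ℝ≥0∞ := fun x => ∏ k ∈ Finset.univ.erase a, g k (x.1 k)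
    have hW : Measurable W := Finset.measurable_prod _ fun k _ => (hg k).comp (mx k)
    let μ : Measure ℝ := ((sphereHaar n).withDensity W).map (fun x => x.1 a)
    let ν : Measure ℝ := (sphereHaar n).map (fun x => x.1 a)
    have : IsFiniteMeasure ν := Measure.isFiniteMeasure_map _ _
    let Cc : ℝ≥0∞ := ∏ k ∈ Finset.univ.erase a, (∫⁻ x : Sph n, (g k (x.1 k))^2 ∂(sphereHaar n)) ^ ((1:ℝ)/2)
    have hμ : ∀ u : ℝ → ℝ≥0∞, Measurable u → ∫⁻ x, u x ∂μ = ∫⁻ x : Sph n, u (x.1 a) * W x ∂(sphereHaar n) := by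
      intro u hu
      have hm : Measurable (fun x : Sph n => u (x.1 a)) := hu.comp (mx a)
      rw [lintegral_map hu (mx a), lintegral_withDensity_eq_lintegral_mul _ hW hm]
      refine lintegral_congr fun x => ?_
      simp [mul_comm]
    have hν : ∀ u : ℝ → ℝ≥0∞, Measurable u → ∫⁻ x, (u x)^2 ∂ν = ∫⁻ x : Sph n, (u (x.1 a))^2 ∂(sphereHaar n) := by
      intro u hu
      rw [lintegral_map (hu.pow_const 2) (mx a)]
    have hcont : ∀ φ : ℝ → ℝ, Continuous φ → (∀ x, 0 ≤ φ x) →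
        ∫⁻ x, ENNReal.ofReal (φ x) ∂μ ≤ Cc * (∫⁻ x, (ENNReal.ofReal (φ x))^2 ∂ν)^((1:ℝ)/2) := by
      intro φ hφ h0
      have hm : Measurable (fun x => ENNReal.ofReal (φ x)) := hφ.measurable.ennreal_ofReal
      rw [hμ _ hm, hν _ hm]
      have := ih (Function.update g a (fun x => ENNReal.ofReal (φ x))) ?_ ?_
      · rw [← Finset.mul_prod_erase _ _ (Finset.mem_univ a), mul_comm] at this
        refine le_trans (le_of_eq ?_) (this.trans (le_of_eq ?_))
        · refine lintegral_congr fun x => ?_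
          rw [← Finset.mul_prod_erase _ _ (Finset.mem_univ a)]
          simp only [Function.update_self, W]
          congr 1
          refine Finset.prod_congr rfl fun k hk => ?_
          rw [Function.update_of_ne (Finset.ne_of_mem_erase hk)]
        · simp only [Function.update_self, Cc]
          congr 1
          refine Finset.prod_congr rfl fun k hk => ?_
          rw [Function.update_of_ne (Finset.ne_of_mem_erase hk)]
      · intro i
        by_cases hi : i = a
        · subst hi; simpa using hm
        · rw [Function.update_of_ne hi]; exact hg i
      · intro i his
        by_cases hi : i = a
        · subst hi; exact ⟨φ, hφ, h0, by simp⟩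
        · rw [Function.update_of_ne hi]
          exact h i (by simp [hi, his])
    have goalL : ∫⁻ x : Sph n, ∏ k, g k (x.1 k) ∂(sphereHaar n) = ∫⁻ x, g a x ∂μ := by
      rw [hμ _ (hg a)]
      refine lintegral_congr fun x => ?_
      rw [← Finset.mul_prod_erase _ _ (Finset.mem_univ a)]
    have goalR : ∏ k, (∫⁻ x : Sph n, (g k (x.1 k))^2 ∂(sphereHaar n)) ^ ((1:ℝ)/2) = 
        Cc * (∫⁻ x, (g a x)^2 ∂ν)^((1:ℝ)/2) := by
      rw [hν _ (hg a), ← Finset.mul_prod_erase _ _ (Finset.mem_univ a), mul_comm]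
    rw [goalL, goalR]
    by_cases hC : Cc = ∞
    · by_cases hz : ∫⁻ x, (g a x)^2 ∂ν = 0
      · have hm : Measurable (fun x : Sph n => g a (x.1 a)) := (hg a).comp (mx a)
        rw [hν _ (hg a), lintegral_eq_zero_iff (hm.pow_const 2)] at hz
        rw [hμ _ (hg a)]
        have : ∫⁻ x : Sph n, g a (x.1 a) * W x ∂(sphereHaar n) = 0 := by
          refine (lintegral_eq_zero_iff (hm.mul hW)).2 ?_
          filter_upwards [hz] with x hx
          have : g a (x.1 a) = 0 := by simpa using hx
          simp [this]
        rw [this]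
        exact zero_le
      · rw [hC, ENNReal.top_mul]
        · exact le_top
        · rw [Ne, ENNReal.rpow_eq_zero_iff]
          rintro (⟨h, _⟩ | ⟨_, h⟩)
          · exact hz h
          · norm_num at h
    · exact ext_meas μ ν Cc hC hcont (g a) (hg a)

end BLHelpers

/-- **Brascamp–Lieb inequality on the sphere** (Carlen–Lieb–Loss):
for nonnegative measurable functions `g 1, …, g (n+1)` of the coordinates,
`∫_{S^n} ∏ g_i(x_i) dσ_n ≤ ∏ (∫_{S^n} g_i(x_i)^2 dσ_n)^{1/2}`. -/
theorem brascamp_lieb_sphere (n : ℕ) (hn : 1 ≤ n)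
    (g : Fin (n + 1) → ℝ → ℝ≥0∞) (hg : ∀ i, Measurable (g i)) :
    ∫⁻ x : sphere (0 : EuclideanSpace ℝ (Fin (n + 1))) 1,
        ∏ i, g i ((x : EuclideanSpace ℝ (Fin (n + 1))) i) ∂(sphereHaar n) ≤
      ∏ i, (∫⁻ x : sphere (0 : EuclideanSpace ℝ (Fin (n + 1))) 1,
          (g i ((x : EuclideanSpace ℝ (Fin (n + 1))) i)) ^ 2 ∂(sphereHaar n)) ^ ((1 : ℝ) / 2) := by
  exact bl_induct hn Finset.univ g hg (fun i hi => absurd (Finset.mem_univ i) hi)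
end

section
/- Let n ≥ 1 and let i ∈ {1, …, n+1}. The pushforward of σ_n under the coordinate map x ↦ x_i from S^n to [-1,1] equals the measure ν_n on ℝ with density t ↦ c_n · 1_{[-1,1]}(t) · (1 − t²)^{n/2 − 1} with respect to Lebesgue measure, where c_n = Γ((n+1)/2)/(√π · Γ(n/2)) is the constant making ν_n a probability measure. -/
open MeasureTheory Metric
open scoped ENNReal

/-- The measure `ν_n` on `ℝ` with density
`t ↦ c_n · 1_{[-1,1]}(t) · (1 − t²)^{n/2 − 1}` with respect to Lebesgue measure,
where `c_n = Γ((n+1)/2)/(√π · Γ(n/2))`. -/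
noncomputable def nuMeasure (n : ℕ) : Measure ℝ :=
  volume.withDensity fun t => ENNReal.ofReal
    ((Real.Gamma (((n : ℝ) + 1) / 2) / (Real.sqrt Real.pi * Real.Gamma ((n : ℝ) / 2))) *
      Set.indicator (Set.Icc (-1 : ℝ) 1) (fun s => (1 - s ^ 2) ^ ((n : ℝ) / 2 - 1)) t)


lemma lintegral_volumeIoiPow (k : ℕ) (f : ℝ → ℝ≥0∞) (hf : Measurable f) :
    ∫⁻ r, f (r : ℝ) ∂(Measure.volumeIoiPow k)
      = ∫⁻ r in Set.Ioi (0:ℝ), ENNReal.ofReal (r ^ k) * f r := by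
  rw [Measure.volumeIoiPow, lintegral_withDensity_eq_lintegral_mul _ (by fun_prop) (by fun_prop)]
  exact lintegral_subtype_comap measurableSet_Ioi (fun r : ℝ => ENNReal.ofReal (r ^ k) * f r)

/-- Polar coordinates for functions of the form `a (direction) * b (norm)`. -/
lemma lintegral_polar {E : Type*} [NormedAddCommGroup E] [NormedSpace ℝ E] [MeasurableSpace E]
    [BorelSpace E] [FiniteDimensional ℝ E] [Nontrivial E] (μ : Measure E) [μ.IsAddHaarMeasure]
    (a : E → ℝ≥0∞) (b : ℝ → ℝ≥0∞) (ha : Measurable a) (hb : Measurable b) :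
    ∫⁻ x, a (‖x‖⁻¹ • x) * b ‖x‖ ∂μ =
      (∫⁻ u, a (u : E) ∂μ.toSphere) *
        ∫⁻ r in Set.Ioi (0:ℝ), ENNReal.ofReal (r ^ (Module.finrank ℝ E - 1)) * b r := by
  rw [← lintegral_volumeIoiPow _ _ hb, ← lintegral_prod_mul (by fun_prop) (by fun_prop),
    ← (μ.measurePreserving_homeomorphUnitSphereProd).lintegral_comp_emb
      (Homeomorph.measurableEmbedding _)]
  have := lintegral_subtype_comap (μ := μ) (measurableSet_singleton (0:E)).compl
    (fun x => a (‖x‖⁻¹ • x) * b ‖x‖)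
  rw [restrict_compl_singleton] at this
  rw [← this]
  simp

lemma lintegral_split (n : ℕ) (i : Fin (n + 1)) (K : ℝ → ℝ → ℝ≥0∞)
    (hK : Measurable (Function.uncurry K)) :
    ∫⁻ x : EuclideanSpace ℝ (Fin (n+1)), K (x i) (Real.sqrt (‖x‖ ^ 2 - (x i) ^ 2)) =
      ∫⁻ t : ℝ, ∫⁻ y : EuclideanSpace ℝ (Fin n), K t ‖y‖ := by
  have hm : Measurable fun p : ℝ × (Fin n → ℝ) =>
      K p.1 (Real.sqrt (∑ j, (p.2 j) ^ 2)) := by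
    exact hK.comp (f := fun p : ℝ × (Fin n → ℝ) => (p.1, Real.sqrt (∑ j, (p.2 j) ^ 2)))
      (by fun_prop)
  have e1 := ((volume_preserving_piFinSuccAbove (fun _ : Fin (n+1) => ℝ) i).comp
    (EuclideanSpace.volume_preserving_symm_measurableEquiv_toLp (Fin (n+1)))).lintegral_comp hm
  have e2 : ∀ t : ℝ, ∫⁻ y : EuclideanSpace ℝ (Fin n), K t ‖y‖ =
      ∫⁻ y : Fin n → ℝ, K t (Real.sqrt (∑ j, (y j) ^ 2)) := by
    intro t
    have e3 := (EuclideanSpace.volume_preserving_symm_measurableEquiv_toLp (Fin n)).lintegral_comp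
      (hm.comp (measurable_prodMk_left (x := t)))
    simp only [Function.comp_apply] at e3
    rw [← e3]
    simp [EuclideanSpace.norm_eq]
  simp_rw [e2]
  rw [← lintegral_prod _ hm.aemeasurable, ← Measure.volume_eq_prod, ← e1]
  refine lintegral_congr fun x => ?_
  have : ‖x‖ ^ 2 - (x i) ^ 2 = ∑ j, (x (i.succAbove j)) ^ 2 := by
    rw [EuclideanSpace.norm_sq_eq, Fin.sum_univ_succAbove _ i]; simp
  rw [this]
  rfl

lemma lintegral_scale (c : ℝ) (hc : 0 < c) (f : ℝ → ℝ≥0∞) :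
    ∫⁻ r in Set.Ioi (0:ℝ), f r = ∫⁻ r in Set.Ioi (0:ℝ), ENNReal.ofReal c * f (c * r) := by
  have := lintegral_image_eq_lintegral_abs_deriv_mul (measurableSet_Ioi (a := (0:ℝ)))
    (f := fun r => c * r) (f' := fun _ => c)
    (fun x _ => by simpa using ((hasDerivAt_id x).const_mul c).hasDerivWithinAt)
    (fun x _ y _ h => mul_left_cancel₀ hc.ne' h) f
  rw [Set.image_mul_left_Ioi hc] at this
  simpa [abs_of_pos hc] using this

lemma lintegral_subst (ρ : ℝ) (hρ : 0 < ρ) (f : ℝ → ℝ≥0∞) :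
    ∫⁻ t, f t = ∫⁻ s in Set.Ioo (-1:ℝ) 1,
      ENNReal.ofReal (ρ / Real.sqrt (1 - s ^ 2) ^ 3) * f (ρ * (s / Real.sqrt (1 - s ^ 2))) := by
  have hpos : ∀ s ∈ Set.Ioo (-1:ℝ) 1, 0 < 1 - s ^ 2 := fun s hs => by nlinarith [hs.1, hs.2]
  have hsq : ∀ s ∈ Set.Ioo (-1:ℝ) 1, (s / Real.sqrt (1 - s ^ 2)) / Real.sqrt (1 + (s / Real.sqrt (1 - s ^ 2)) ^ 2) = s := by
    intro s hs
    have h := hpos s hs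
    have h1 : 1 + (s / Real.sqrt (1 - s ^ 2)) ^ 2 = (Real.sqrt (1 - s ^ 2))⁻¹ ^ 2 := by
      rw [div_pow, inv_pow, Real.sq_sqrt h.le]; field_simp; ring
    have h2 := Real.sqrt_pos.2 h
    rw [h1, Real.sqrt_sq (by positivity)]
    field_simp
  have key := lintegral_image_eq_lintegral_abs_deriv_mul (measurableSet_Ioo (a := (-1:ℝ)) (b := 1))
    (f := fun s => ρ * (s / Real.sqrt (1 - s ^ 2))) (f' := fun s => ρ / Real.sqrt (1 - s ^ 2) ^ 3)
    (fun s hs => by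
      have h := hpos s hs
      have h2 := Real.sqrt_pos.2 h
      have d1 : HasDerivAt (fun s : ℝ => 1 - s ^ 2) (-(2 * s)) s := by
        simpa using (hasDerivAt_pow 2 s).const_sub 1
      have d2 := ((hasDerivAt_id s).div (d1.sqrt h.ne') h2.ne').const_mul ρ
      refine (d2.congr_deriv ?_).hasDerivWithinAt
      have h3 := Real.sq_sqrt h.le
      simp only [id]
      field_simp
      rw [h3]; ring)
    (fun x hx y hy h => by
      have h' := mul_left_cancel₀ hρ.ne' h
      rw [← hsq x hx, ← hsq y hy, h']) f
  have him : (fun s => ρ * (s / Real.sqrt (1 - s ^ 2))) '' Set.Ioo (-1:ℝ) 1 = Set.univ := by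
    refine Set.eq_univ_of_forall fun t => ?_
    have hp : 0 < ρ ^ 2 + t ^ 2 := by positivity
    have hq := Real.sqrt_pos.2 hp
    have hq2 := Real.sq_sqrt hp.le
    have hb : |t| < Real.sqrt (ρ ^ 2 + t ^ 2) := by
      rw [← Real.sqrt_sq_eq_abs]; exact Real.sqrt_lt_sqrt (sq_nonneg t) (by nlinarith)
    rw [abs_lt] at hb
    refine ⟨t / Real.sqrt (ρ ^ 2 + t ^ 2), ⟨?_, ?_⟩, ?_⟩
    · rw [lt_div_iff₀ hq]; linarith
    · rw [div_lt_iff₀ hq]; linarith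
    · have : 1 - (t / Real.sqrt (ρ ^ 2 + t ^ 2)) ^ 2 = (ρ / Real.sqrt (ρ ^ 2 + t ^ 2)) ^ 2 := by
        rw [div_pow, div_pow, hq2]; field_simp; ring
      simp only [this]
      rw [Real.sqrt_sq (by positivity)]
      field_simp
  rw [him, Measure.restrict_univ] at key
  rw [key]
  refine setLIntegral_congr_fun measurableSet_Ioo fun s hs => ?_
  have h2 := Real.sqrt_pos.2 (hpos s hs)
  rw [abs_of_pos (by positivity)]

lemma lintegral_core (m : ℕ) (g h : ℝ → ℝ≥0∞) (hg : Measurable g) (hh : Measurable h) :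
    ∫⁻ t : ℝ, ∫⁻ ρ in Set.Ioi (0:ℝ), ENNReal.ofReal (ρ ^ m) *
        (g (t / Real.sqrt (t ^ 2 + ρ ^ 2)) * h (Real.sqrt (t ^ 2 + ρ ^ 2))) =
    (∫⁻ s in Set.Ioo (-1:ℝ) 1, ENNReal.ofReal (Real.sqrt (1 - s ^ 2) ^ (m + 1) / (1 - s ^ 2)) * g s)
      * ∫⁻ r in Set.Ioi (0:ℝ), ENNReal.ofReal (r ^ (m + 1)) * h r := by
  rw [lintegral_lintegral_swap (by fun_prop)]
  have hpos : ∀ s ∈ Set.Ioo (-1:ℝ) 1, 0 < 1 - s ^ 2 := fun s hs => by nlinarith [hs.1, hs.2]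
  calc _ = ∫⁻ ρ in Set.Ioi (0:ℝ), ∫⁻ s in Set.Ioo (-1:ℝ) 1,
        ENNReal.ofReal (ρ / Real.sqrt (1 - s ^ 2) ^ 3) * (ENNReal.ofReal (ρ ^ m) *
          (g s * h (ρ / Real.sqrt (1 - s ^ 2)))) := by
        refine setLIntegral_congr_fun measurableSet_Ioi fun ρ hρ => ?_
        have hρ : 0 < ρ := hρ
        rw [lintegral_subst ρ hρ]
        refine setLIntegral_congr_fun measurableSet_Ioo fun s hs => ?_
        have h2 := Real.sqrt_pos.2 (hpos s hs)
        have h3 : (ρ * (s / Real.sqrt (1 - s ^ 2))) ^ 2 + ρ ^ 2 = (ρ / Real.sqrt (1 - s ^ 2)) ^ 2 := by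
          have := hpos s hs
          rw [mul_pow, div_pow, div_pow, Real.sq_sqrt this.le]; field_simp; ring
        simp only [h3]
        rw [Real.sqrt_sq (by positivity)]
        have h4 : ρ * (s / Real.sqrt (1 - s ^ 2)) / (ρ / Real.sqrt (1 - s ^ 2)) = s := by
          field_simp
        rw [h4]
    _ = ∫⁻ s in Set.Ioo (-1:ℝ) 1, ∫⁻ ρ in Set.Ioi (0:ℝ), 
        ENNReal.ofReal (ρ / Real.sqrt (1 - s ^ 2) ^ 3) * (ENNReal.ofReal (ρ ^ m) *
          (g s * h (ρ / Real.sqrt (1 - s ^ 2)))) := by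
        rw [lintegral_lintegral_swap (by fun_prop)]
    _ = _ := by
        rw [← lintegral_mul_const _ (by fun_prop)]
        refine setLIntegral_congr_fun measurableSet_Ioo fun s hs => ?_
        have h2 := Real.sqrt_pos.2 (hpos s hs)
        rw [lintegral_scale _ h2, ← lintegral_const_mul _ (by fun_prop)]
        refine setLIntegral_congr_fun measurableSet_Ioi fun r hr => ?_
        have hr : 0 < r := hr
        have h3 := Real.sq_sqrt (hpos s hs).le
        rw [mul_div_cancel_left₀ _ h2.ne']
        generalize Real.sqrt (1 - s ^ 2) = q at *
        rw [← h3]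
        have : ENNReal.ofReal q * (ENNReal.ofReal (q * r / q ^ 3) * ENNReal.ofReal ((q * r) ^ m))
          = ENNReal.ofReal (q ^ (m + 1) / q ^ 2) * ENNReal.ofReal (r ^ (m + 1)) := by
          rw [← ENNReal.ofReal_mul (by positivity), ← ENNReal.ofReal_mul (by positivity),
            ← ENNReal.ofReal_mul (by positivity)]
          congr 1
          field_simp
          ring
        calc _ = (ENNReal.ofReal q * (ENNReal.ofReal (q * r / q ^ 3) * ENNReal.ofReal ((q * r) ^ m))) * (g s * h r) := by ring
          _ = _ := by rw [this]; ring


lemma sphere_core (m : ℕ) (i : Fin (m + 1 + 1)) (g : ℝ → ℝ≥0∞) (hg : Measurable g) :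
    ∫⁻ u, g ((u : EuclideanSpace ℝ (Fin (m + 1 + 1))) i)
        ∂((volume : Measure (EuclideanSpace ℝ (Fin (m + 1 + 1)))).toSphere) =
      (volume : Measure (EuclideanSpace ℝ (Fin (m + 1)))).toSphere Set.univ *
        ∫⁻ s in Set.Ioo (-1:ℝ) 1,
          ENNReal.ofReal (Real.sqrt (1 - s ^ 2) ^ (m + 1) / (1 - s ^ 2)) * g s := by
  set h : ℝ → ℝ≥0∞ := Set.indicator (Set.Iio 1) 1 with hdef
  have hh : Measurable h := measurable_one.indicator measurableSet_Iio
  set C := ∫⁻ r in Set.Ioi (0:ℝ), ENNReal.ofReal (r ^ (m + 1)) * h r with hC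
  have hCval : C = ENNReal.ofReal (1 / ((m + 1 : ℕ) + 1)) := by
    have h1 := Measure.volumeIoiPow_apply_Iio (m + 1) ⟨1, Set.mem_Ioi.2 one_pos⟩
    rw [hC, ← lintegral_volumeIoiPow _ _ hh]
    rw [one_pow] at h1
    rw [← h1, ← lintegral_indicator_one measurableSet_Iio]
    rfl
  have hC0 : C ≠ 0 := by
    rw [hCval]; exact (ENNReal.ofReal_pos.2 (by positivity)).ne'
  have hCt : C ≠ ∞ := by rw [hCval]; exact ENNReal.ofReal_ne_top
  have p1 := lintegral_polar (volume : Measure (EuclideanSpace ℝ (Fin (m + 1 + 1))))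
    (fun x => g (x i)) h (by fun_prop) hh
  have sp := lintegral_split (m + 1) i
    (fun t ρ => g (t / Real.sqrt (t ^ 2 + ρ ^ 2)) * h (Real.sqrt (t ^ 2 + ρ ^ 2)))
    (by unfold Function.uncurry; fun_prop)
  have p2 : ∀ t : ℝ, _ := fun t =>
    lintegral_polar (volume : Measure (EuclideanSpace ℝ (Fin (m + 1))))
      (fun _ => 1) (fun ρ => g (t / Real.sqrt (t ^ 2 + ρ ^ 2)) * h (Real.sqrt (t ^ 2 + ρ ^ 2)))
      (by fun_prop) (by fun_prop)
  simp only [one_mul, lintegral_one, finrank_euclideanSpace_fin, Nat.add_sub_cancel] at p1 p2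
  simp only [p2] at sp
  rw [lintegral_const_mul _ (by fun_prop), lintegral_core m g h hg hh] at sp
  have e : ∀ x : EuclideanSpace ℝ (Fin (m + 1 + 1)),
      g (x i / Real.sqrt (x i ^ 2 + Real.sqrt (‖x‖ ^ 2 - x i ^ 2) ^ 2)) *
        h (Real.sqrt (x i ^ 2 + Real.sqrt (‖x‖ ^ 2 - x i ^ 2) ^ 2)) =
      g ((‖x‖⁻¹ • x) i) * h ‖x‖ := by
    intro x
    have hx : x i ^ 2 ≤ ‖x‖ ^ 2 := by
      have := PiLp.norm_apply_le x i
      rw [← sq_abs]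
      exact pow_le_pow_left₀ (abs_nonneg _) (by simpa using this) 2
    rw [Real.sq_sqrt (by linarith), add_sub_cancel, Real.sqrt_sq (norm_nonneg x)]
    congr 2
    simp [div_eq_inv_mul]
  rw [lintegral_congr e, p1, ← mul_assoc] at sp
  exact (ENNReal.mul_left_inj hC0 hCt).1 sp

lemma toSphere_univ_val (m : ℕ) :
    (volume : Measure (EuclideanSpace ℝ (Fin (m + 1)))).toSphere Set.univ =
      ENNReal.ofReal (2 * Real.sqrt Real.pi ^ (m + 1) / Real.Gamma (((m : ℝ) + 1) / 2)) := by
  rw [Measure.toSphere_apply_univ, EuclideanSpace.volume_ball]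
  simp only [finrank_euclideanSpace_fin, Fintype.card_fin, ENNReal.ofReal_one, one_pow, one_mul]
  rw [← ENNReal.ofReal_natCast, ← ENNReal.ofReal_mul (by positivity)]
  congr 1
  have h0 : ((m : ℝ) + 1) / 2 ≠ 0 := by positivity
  have hG : 0 < Real.Gamma (((m : ℝ) + 1) / 2) := Real.Gamma_pos_of_pos (by positivity)
  push_cast
  rw [Real.Gamma_add_one h0]
  field_simp

/-- The pushforward of the normalized Haar measure `σ_n` on `S^n` under the `i`-th
coordinate map is the measure `ν_n` on `[-1,1]` with density
`c_n (1 − t²)^{n/2 − 1}`, `c_n = Γ((n+1)/2)/(√π Γ(n/2))`. -/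
theorem map_coord_sphereHaar (n : ℕ) (hn : 1 ≤ n) (i : Fin (n + 1)) :
    Measure.map (fun x : sphere (0 : EuclideanSpace ℝ (Fin (n + 1))) 1 =>
        (x : EuclideanSpace ℝ (Fin (n + 1))) i) (sphereHaar n) = nuMeasure n := by
  obtain ⟨m, rfl⟩ : ∃ m, n = m + 1 := ⟨n - 1, by omega⟩
  have hmeas : Measurable (fun x : sphere (0 : EuclideanSpace ℝ (Fin (m + 1 + 1))) 1 =>
        (x : EuclideanSpace ℝ (Fin (m + 1 + 1))) i) := by fun_prop
  have hcore := sphere_core m i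
  ext A hA
  have hc := hcore (A.indicator 1) (measurable_one.indicator hA)
  have hl : ∫⁻ u, A.indicator (1 : ℝ → ℝ≥0∞) ((u : EuclideanSpace ℝ (Fin (m + 1 + 1))) i)
        ∂((volume : Measure (EuclideanSpace ℝ (Fin (m + 1 + 1)))).toSphere) =
      (volume : Measure (EuclideanSpace ℝ (Fin (m + 1 + 1)))).toSphere
        ((fun x : sphere (0 : EuclideanSpace ℝ (Fin (m + 1 + 1))) 1 =>
        (x : EuclideanSpace ℝ (Fin (m + 1 + 1))) i) ⁻¹' A) := by
    rw [← lintegral_indicator_one (hmeas hA)]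
    rfl
  have hG1 : 0 < Real.Gamma (((m : ℝ) + 1) / 2) := Real.Gamma_pos_of_pos (by positivity)
  have hG2 : 0 < Real.Gamma (((m : ℝ) + 1 + 1) / 2) := Real.Gamma_pos_of_pos (by positivity)
  have hpi : 0 < Real.sqrt Real.pi := Real.sqrt_pos.2 Real.pi_pos
  rw [Measure.map_apply hmeas hA, sphereHaar, Measure.smul_apply, ← hl, hc, smul_eq_mul, ← mul_assoc,
    toSphere_univ_val, toSphere_univ_val, nuMeasure, withDensity_apply _ hA]
  push_cast
  rw [← ENNReal.ofReal_inv_of_pos (by positivity), ← ENNReal.ofReal_mul (by positivity),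
    ← lintegral_const_mul _ (by
      have : Measurable (A.indicator (1 : ℝ → ℝ≥0∞)) := measurable_one.indicator hA
      fun_prop),
    ← lintegral_indicator hA, Measure.restrict_congr_set (Ioo_ae_eq_Icc (a := (-1:ℝ)) (b := 1)),
    ← lintegral_indicator measurableSet_Icc]
  have hae : ∀ᵐ s : ℝ, s ≠ -1 ∧ s ≠ 1 := by
    have h1 : ∀ᵐ s : ℝ, s ≠ -1 := by simp [ae_iff]
    have h2 : ∀ᵐ s : ℝ, s ≠ 1 := by simp [ae_iff]
    exact h1.and h2
  refine lintegral_congr_ae (hae.mono fun s hs => ?_)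
  by_cases hsA : s ∈ A <;> by_cases hsI : s ∈ Set.Icc (-1:ℝ) 1 <;> simp only [hsA, hsI,
    Set.indicator_of_mem, Set.indicator_of_notMem, not_false_eq_true, mul_zero,
    ENNReal.ofReal_zero, Pi.one_apply, mul_one]
  have h1 : -1 < s := lt_of_le_of_ne hsI.1 (Ne.symm hs.1)
  have h2 : s < 1 := lt_of_le_of_ne hsI.2 hs.2
  have hp : 0 < 1 - s ^ 2 := by nlinarith
  rw [← ENNReal.ofReal_mul (by positivity)]
  congr 1
  have hr : (1 - s ^ 2) ^ (((m : ℝ) + 1) / 2 - 1) =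
      Real.sqrt (1 - s ^ 2) ^ (m + 1) / (1 - s ^ 2) := by
    rw [Real.rpow_sub_one hp.ne', Real.sqrt_eq_rpow, ← Real.rpow_natCast _ (m + 1),
      ← Real.rpow_mul hp.le]
    congr 2
    push_cast
    ring
  rw [hr]
  congr 1
  field_simp
  ring
end
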